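/- Let T > 0, let g : [0,∞) → [0,∞) be continuously differentiable with g(0) = 0, g(s) > 0 and g'(s) > 0 for all s > 0, lim_{s→0⁺} g(s)/s = 0 and lim_{s→+∞} g(s)/s = +∞. Let a ∈ L¹([0,T]) satisfy (a1). Then the equation u'' + a(x) g(u) = 0 has a positive solution satisfying the Neumann boundary conditions if and only if ∫₀ᵀ a(x) dx < 0, and it has a positive solution satisfying the periodic boundary conditions if and only if ∫₀ᵀ a(x) dx < 0. -/

import Mathlib

open MeasureTheory Set Filter

/-- `u` (with derivative `u'`) is a C¹ solution of `u'' + f(x) = 0` on `[0,T]`: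
`u'` is absolutely continuous and the equation holds a.e., expressed via the
integral equation `u'(x) = u'(0) − ∫₀ˣ f(t) dt`. -/
def IsSolOn (T : ℝ) (f : ℝ → ℝ) (u u' : ℝ → ℝ) : Prop :=
  (∀ x ∈ Icc (0:ℝ) T, HasDerivWithinAt u (u' x) (Icc (0:ℝ) T) x) ∧
  ContinuousOn u' (Icc (0:ℝ) T) ∧
  ∀ x ∈ Icc (0:ℝ) T, u' x = u' 0 - ∫ t in (0:ℝ)..x, f t

/-- The equation `u'' + a(x) g(u) = 0` on `[0,T]` has a positive solution
satisfying the Neumann boundary conditions. -/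
def PosSolNeumann (T : ℝ) (a g : ℝ → ℝ) : Prop :=
  ∃ u u' : ℝ → ℝ, IsSolOn T (fun t => a t * g (u t)) u u' ∧
    (∀ x ∈ Icc (0:ℝ) T, 0 < u x) ∧ u' 0 = 0 ∧ u' T = 0

/-- The equation `u'' + a(x) g(u) = 0` on `[0,T]` has a positive solution
satisfying the periodic boundary conditions. -/
def PosSolPeriodic (T : ℝ) (a g : ℝ → ℝ) : Prop :=
  ∃ u u' : ℝ → ℝ, IsSolOn T (fun t => a t * g (u t)) u u' ∧
    (∀ x ∈ Icc (0:ℝ) T, 0 < u x) ∧ u 0 = u T ∧ u' 0 = u' T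

/-- Condition (a1): there are `m ≥ 1` pairwise disjoint closed intervals in `[0,T]`
on which `a ≥ 0` a.e. and `a` is not a.e. zero, while `a ≤ 0` a.e. outside them. -/
def CondA1 (T : ℝ) (a : ℝ → ℝ) : Prop :=
  ∃ (m : ℕ) (σ τ : Fin m → ℝ), 0 < m ∧
    (∀ i, 0 ≤ σ i ∧ σ i ≤ τ i ∧ τ i ≤ T) ∧
    (Pairwise fun i j => Disjoint (Icc (σ i) (τ i)) (Icc (σ j) (τ j))) ∧
    (∀ i, ∀ᵐ x ∂(volume.restrict (Icc (σ i) (τ i))), 0 ≤ a x) ∧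
    (∀ i, ¬ (∀ᵐ x ∂(volume.restrict (Icc (σ i) (τ i))), a x = 0)) ∧
    (∀ᵐ x ∂(volume.restrict (Icc (0:ℝ) T \ ⋃ i, Icc (σ i) (τ i))), a x ≤ 0)


/-!
Necessity: dividing the equation by `g (u)` and integrating by parts gives
`-∫ a = ∫ g'(u) u'² / g(u)² ≥ 0`; in the equality case `u` is constant, which contradicts the
equation on an interval where `a ≥ 0` is not a.e. zero.

Existence is a mountain pass argument, run for both boundary conditions at once in the space of
`H¹` functions satisfying the essential ones. Comparison of a positive solution with the square of
a bump function supported in a positivity interval `I` shows that `u` cannot be larger than `R`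
throughout `I` if `h s ≥ M s` for `s ≥ R` with `M` large. As `u` is concave on `I`, this bounds it
by `C * R` on a slightly larger interval, and on the rest of `[0, T]` by the maximum principle; `C`
does not depend on `R`. Therefore `g` may be replaced beyond `C * R` by an affine function of slope
`M`, and extended by `0` to the negative half-line. The same bound, being scale invariant, excludes
positive solutions of the problem with nonlinearity `M s⁺`, which makes Palais–Smale sequences of
the new problem bounded; they converge by compactness of `H¹ ↪ C`.

The energy has a barrier around `0` since `∫ a < 0` makes constants costly, and it is negative at a
large multiple of the bump. A Palais–Smale sequence comes without a deformation lemma: the discrete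
gradient step never increases the energy, so it preserves the parts of the sublevel set on either
side of the barrier, and by connectedness some orbit starting on the segment between the two low
points enters neither.
-/

section MountainPass

open Topology RealInnerProductSpace

lemma exists_forall_iterate_notMem_union {E S : Type*} [TopologicalSpace E] [TopologicalSpace S]
    [PreconnectedSpace S] {Φ : E → E} (hΦ : Continuous Φ) {A B : Set E} (hA : IsOpen A)
    (hB : IsOpen B) (hAB : Disjoint A B) (hΦA : MapsTo Φ A A) (hΦB : MapsTo Φ B B) {γ : S → E}
    (hγ : Continuous γ) {s₀ s₁ : S} (h₀ : γ s₀ ∈ A) (h₁ : γ s₁ ∈ B) :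
    ∃ s, ∀ n, Φ^[n] (γ s) ∉ A ∪ B := by
  by_contra! hescape
  have hopen {V : Set E} (hV : IsOpen V) : IsOpen (⋃ n, {s | Φ^[n] (γ s) ∈ V}) :=
    isOpen_iUnion fun n => hV.preimage ((hΦ.iterate n).comp hγ)
  have hcover : univ ⊆ (⋃ n, {s | Φ^[n] (γ s) ∈ A}) ∪ ⋃ n, {s | Φ^[n] (γ s) ∈ B} := by
    intro s _
    obtain ⟨n, hn | hn⟩ := hescape s
    exacts [Or.inl (mem_iUnion.2 ⟨n, hn⟩), Or.inr (mem_iUnion.2 ⟨n, hn⟩)]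
  obtain ⟨s, -, hsA, hsB⟩ := isPreconnected_univ _ _ (hopen hA) (hopen hB) hcover
    ⟨s₀, mem_univ _, mem_iUnion.2 ⟨0, h₀⟩⟩ ⟨s₁, mem_univ _, mem_iUnion.2 ⟨0, h₁⟩⟩
  obtain ⟨m, hm⟩ := mem_iUnion.1 hsA
  obtain ⟨n, hn⟩ := mem_iUnion.1 hsB
  refine disjoint_left.1 hAB (hΦA.iterate n hm) ?_
  rw [← Function.iterate_add_apply, add_comm, Function.iterate_add_apply]
  exact hΦB.iterate m hn

lemma mapsTo_sublevel_inter_of_barrier {E : Type*} [AddCommGroup E] [Module ℝ E]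
    [TopologicalSpace E] [IsTopologicalAddGroup E] [ContinuousSMul ℝ E] {J r : E → ℝ} {Φ : E → E}
    {α ρ : ℝ} (hr : Continuous r)
    (hdec : ∀ z, ∀ t ∈ Icc (0 : ℝ) 1, J (AffineMap.lineMap z (Φ z) t) ≤ J z)
    (hbarrier : ∀ z, r z = ρ → α ≤ J z) :
    MapsTo Φ {z | J z < α ∧ r z < ρ} {z | J z < α ∧ r z < ρ} := by
  rintro z ⟨hJ, hrz⟩
  have hsub : ∀ t ∈ Icc (0 : ℝ) 1, J (AffineMap.lineMap z (Φ z) t) < α := fun t ht =>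
    (hdec z t ht).trans_lt hJ
  refine ⟨by simpa using hsub 1 (right_mem_Icc.2 zero_le_one), ?_⟩
  by_contra! hcross
  have hcont : ContinuousOn (fun t : ℝ => r (AffineMap.lineMap z (Φ z) t)) (Icc 0 1) :=
    (hr.comp AffineMap.lineMap_continuous).continuousOn
  obtain ⟨t, ht, hrt⟩ := intermediate_value_Icc zero_le_one hcont
    (show ρ ∈ Icc _ _ from ⟨by simpa using hrz.le, by simpa using hcross⟩)
  exact (hsub t ht).not_ge (hbarrier _ hrt)

lemma tendsto_zero_of_add_le_of_bddBelow {j d : ℕ → ℝ} {α : ℝ} (hd : ∀ n, 0 ≤ d n)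
    (hj : ∀ n, α ≤ j n) (hdec : ∀ n, j (n + 1) + d n ≤ j n) : Tendsto d atTop (𝓝 0) := by
  have hsum (n : ℕ) : j n + ∑ i ∈ Finset.range n, d i ≤ j 0 := by
    induction n with
    | zero => simp
    | succ n ih => rw [Finset.sum_range_succ]; linarith [hdec n]
  exact (summable_of_sum_range_le hd (c := j 0 - α)
    fun n => by linarith [hsum n, hj n]).tendsto_atTop_zero

-- The points whose orbit falls below `α` inside, respectively outside, the barrier form disjoint
-- open subsets of the segment `[z₀, z₁]`.
lemma exists_forall_le_iterate_of_barrier {E : Type*} [AddCommGroup E] [Module ℝ E]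
    [TopologicalSpace E] [IsTopologicalAddGroup E] [ContinuousSMul ℝ E] {J r : E → ℝ} {Φ : E → E}
    {α ρ : ℝ} (hJ : Continuous J) (hr : Continuous r) (hΦ : Continuous Φ)
    (hdec : ∀ z, ∀ t ∈ Icc (0 : ℝ) 1, J (AffineMap.lineMap z (Φ z) t) ≤ J z)
    (hbarrier : ∀ z, r z = ρ → α ≤ J z) {z₀ z₁ : E} (hJ₀ : J z₀ < α) (hr₀ : r z₀ < ρ)
    (hJ₁ : J z₁ < α) (hr₁ : ρ < r z₁) : ∃ z, ∀ n, α ≤ J (Φ^[n] z) := by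
  have hinside := mapsTo_sublevel_inter_of_barrier hr hdec hbarrier
  have houtside := mapsTo_sublevel_inter_of_barrier (r := fun z => -r z) (ρ := -ρ) hr.neg hdec
    fun z hz => hbarrier z (neg_injective hz)
  obtain ⟨s, hs⟩ := exists_forall_iterate_notMem_union hΦ
    ((isOpen_lt hJ continuous_const).inter (isOpen_lt hr continuous_const))
    ((isOpen_lt hJ continuous_const).inter (isOpen_lt hr.neg continuous_const))
    (disjoint_left.2 fun z hz hz' => lt_asymm hz.2 (neg_lt_neg_iff.1 (show -r z < -ρ from hz'.2)))
    hinside houtside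
    (AffineMap.lineMap_continuous (p := z₀) (q := z₁) (R := ℝ)) (s₀ := 0) (s₁ := 1)
    (by simpa using ⟨hJ₀, hr₀⟩) (by simpa using ⟨hJ₁, hr₁⟩)
  refine ⟨AffineMap.lineMap z₀ z₁ s, fun n => ?_⟩
  by_contra! hlt
  rcases lt_trichotomy (r (Φ^[n] (AffineMap.lineMap z₀ z₁ s))) ρ with h | h | h
  · exact hs n (Or.inl ⟨hlt, h⟩)
  · exact hlt.not_ge (hbarrier _ h)
  · exact hs n (Or.inr ⟨hlt, neg_lt_neg h⟩)

section GradientDescent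

variable {E : Type*} [NormedAddCommGroup E] [InnerProductSpace ℝ E] {J : E → ℝ} {G : E → E} {L : ℝ}

lemma apply_lineMap_gradient_step_le (hL : 0 < L)
    (hquad : ∀ z w, J (z + w) ≤ J z + ⟪G z, w⟫ + L * ‖w‖ ^ 2) (z : E) (t : ℝ) :
    J (AffineMap.lineMap z (z - (2 * L)⁻¹ • G z) t)
      ≤ J z - (t - t ^ 2 / 2) * ((2 * L)⁻¹ * ‖G z‖ ^ 2) := by
  have hline : AffineMap.lineMap z (z - (2 * L)⁻¹ • G z) t = z + (-(t * (2 * L)⁻¹)) • G z := by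
    rw [AffineMap.lineMap_apply_module']
    module
  have h := hquad z ((-(t * (2 * L)⁻¹)) • G z)
  rw [inner_smul_right, real_inner_self_eq_norm_sq, norm_smul, mul_pow, Real.norm_eq_abs,
    sq_abs] at h
  rw [hline]
  refine h.trans_eq ?_
  field_simp
  ring

theorem exists_tendsto_gradient_zero_of_barrier {r : E → ℝ} {α ρ : ℝ} (hJ : Continuous J)
    (hG : Continuous G) (hr : Continuous r) (hL : 0 < L)
    (hquad : ∀ z w, J (z + w) ≤ J z + ⟪G z, w⟫ + L * ‖w‖ ^ 2)
    (hbarrier : ∀ z, r z = ρ → α ≤ J z) {z₀ z₁ : E} (hJ₀ : J z₀ < α) (hr₀ : r z₀ < ρ)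
    (hJ₁ : J z₁ < α) (hr₁ : ρ < r z₁) :
    ∃ z : ℕ → E, (∀ n, α ≤ J (z n)) ∧ Tendsto (fun n => G (z n)) atTop (𝓝 0) := by
  have hgain (z : E) : 0 ≤ (2 * L)⁻¹ * ‖G z‖ ^ 2 := by positivity
  obtain ⟨z, hz⟩ := exists_forall_le_iterate_of_barrier (Φ := fun z => z - (2 * L)⁻¹ • G z) hJ hr
    (by fun_prop) (fun z t ht => by
      nlinarith [apply_lineMap_gradient_step_le hL hquad z t,
        mul_nonneg (mul_nonneg ht.1 (by linarith [ht.2] : 0 ≤ 2 - t)) (hgain z)])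
    hbarrier hJ₀ hr₀ hJ₁ hr₁
  set orbit : ℕ → E := fun n => (fun z => z - (2 * L)⁻¹ • G z)^[n] z
  have hstep (n : ℕ) : J (orbit (n + 1)) + (4 * L)⁻¹ * ‖G (orbit n)‖ ^ 2 ≤ J (orbit n) := by
    have h := apply_lineMap_gradient_step_le hL hquad (orbit n) 1
    have hsucc : orbit (n + 1) = orbit n - (2 * L)⁻¹ • G (orbit n) :=
      Function.iterate_succ_apply' _ _ _
    rw [AffineMap.lineMap_apply_one, ← hsucc] at h
    refine (add_le_add_left h _).trans_eq ?_
    field_simp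
    ring
  have hlim := (tendsto_zero_of_add_le_of_bddBelow (fun n => by positivity) hz hstep).const_mul
    (4 * L)
  simp only [mul_inv_cancel_left₀ (by positivity : 4 * L ≠ 0), mul_zero] at hlim
  exact ⟨orbit, hz, tendsto_zero_iff_norm_tendsto_zero.2 (by simpa using hlim.sqrt)⟩

end GradientDescent

section PalaisSmale

lemma exists_subseq_tendsto_fixedPoint {E Y : Type*} [NormedAddCommGroup E] [NormedSpace ℝ E]
    [NormedAddCommGroup Y] [NormedSpace ℝ Y] {U : E →L[ℝ] Y} (hU : IsCompactOperator U)
    {G : Y → E} (hG : Continuous G) {z : ℕ → E} (hz : BddAbove (range fun n => ‖z n‖))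
    (hlim : Tendsto (fun n => z n - G (U (z n))) atTop (𝓝 0)) :
    ∃ zLim, zLim = G (U zLim) ∧ ∃ φ : ℕ → ℕ, StrictMono φ ∧ Tendsto (z ∘ φ) atTop (𝓝 zLim) := by
  obtain ⟨R, hR⟩ := hz
  have hball : ∀ n, z n ∈ Metric.closedBall (0 : E) R := fun n =>
    mem_closedBall_zero_iff.2 (hR ⟨n, rfl⟩)
  obtain ⟨y, -, φ, hφ, hUz⟩ := (hU.isCompact_closure_image_closedBall R).tendsto_subseq
    fun n => subset_closure (mem_image_of_mem U (hball n))
  have hGz := (hG.tendsto y).comp hUz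
  have hzφ : Tendsto (z ∘ φ) atTop (𝓝 (G y)) := by
    simpa [Function.comp_def] using (hlim.comp hφ.tendsto_atTop).add hGz
  have hy : U (G y) = y :=
    tendsto_nhds_unique ((U.continuous.tendsto _).comp hzφ) hUz
  exact ⟨G y, by rw [hy], φ, hφ, hzφ⟩

-- Otherwise `z n / ‖z n‖` subconverges to a fixed point of `Gₕ ∘ U` of norm one.
lemma bddAbove_norm_of_asymptotically_homogeneous {E Y : Type*} [NormedAddCommGroup E]
    [NormedSpace ℝ E] [NormedAddCommGroup Y] [NormedSpace ℝ Y] {U : E →L[ℝ] Y}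
    (hU : IsCompactOperator U) {G Gₕ : Y → E} (hGh : Continuous Gₕ)
    (hsmul : ∀ (s : ℝ) u, 0 ≤ s → Gₕ (s • u) = s • Gₕ u) {B : ℝ} (hB : ∀ u, ‖G u - Gₕ u‖ ≤ B)
    (hfix : ∀ z, z = Gₕ (U z) → z = 0) {z : ℕ → E}
    (hlim : Tendsto (fun n => z n - G (U (z n))) atTop (𝓝 0)) :
    BddAbove (range fun n => ‖z n‖) := by
  by_contra hunbdd
  have hfreq (k : ℕ) : ∃ᶠ n in atTop, (k : ℝ) < ‖z n‖ := fun h =>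
    hunbdd (IsBoundedUnder.bddAbove_range ⟨k, eventually_map.2 (h.mono fun _ => le_of_not_gt)⟩)
  obtain ⟨φ, hφ, hφz⟩ := extraction_forall_of_frequently hfreq
  have hinv : Tendsto (fun k => ‖z (φ k)‖⁻¹) atTop (𝓝 0) := tendsto_inv_atTop_zero.comp
    (tendsto_atTop_mono (fun k => (hφz k).le) tendsto_natCast_atTop_atTop)
  have hpos (k : ℕ) : 0 < ‖z (φ k)‖ := k.cast_nonneg.trans_lt (hφz k)
  set y : ℕ → E := fun k => ‖z (φ k)‖⁻¹ • z (φ k) with hy_def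
  have hy (k : ℕ) : ‖y k‖ = 1 := by
    rw [hy_def, norm_smul, norm_inv, norm_norm, inv_mul_cancel₀ (hpos k).ne']
  have hbounded : BddAbove (range fun k => ‖y k‖) := ⟨1, by rintro _ ⟨k, rfl⟩; exact (hy k).le⟩
  have hdiff : Tendsto (fun k => ‖z (φ k)‖⁻¹ • (G (U (z (φ k))) - Gₕ (U (z (φ k))))) atTop (𝓝 0) :=
    hinv.zero_smul_isBoundedUnder_le
      (isBoundedUnder_of ⟨B, fun k => hB (U (z (φ k)))⟩)
  have hylim : Tendsto (fun k => y k - Gₕ (U (y k))) atTop (𝓝 0) := by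
    convert (hinv.smul (hlim.comp hφ.tendsto_atTop)).add hdiff using 2 with k
    · rw [hy_def, map_smul, hsmul _ _ (inv_nonneg.2 (norm_nonneg _))]
      simp only [Function.comp_apply]
      module
    · simp
  obtain ⟨yLim, hfixed, ψ, -, hψ⟩ := exists_subseq_tendsto_fixedPoint hU hGh hbounded hylim
  have hnorm : ‖yLim‖ = 1 := tendsto_nhds_unique hψ.norm (by simp [hy])
  rw [hfix yLim hfixed, norm_zero] at hnorm
  exact zero_ne_one hnorm

end PalaisSmale

section CompactGradient

variable {E Y : Type*} [NormedAddCommGroup E] [InnerProductSpace ℝ E] [CompleteSpace E]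
  [NormedAddCommGroup Y] [NormedSpace ℝ Y]

/-- The pullback along `U` of the covector field `F`, seen as a vector field by the Riesz
representation. -/
noncomputable def rieszPullback (U : E →L[ℝ] Y) (F : Y → StrongDual ℝ Y) (u : Y) : E :=
  (InnerProductSpace.toDual ℝ E).symm ((F u).comp U)

lemma inner_rieszPullback (U : E →L[ℝ] Y) (F : Y → StrongDual ℝ Y) (u : Y) (w : E) :
    ⟪rieszPullback U F u, w⟫ = F u (U w) := by
  simp [rieszPullback]

lemma continuous_rieszPullback (U : E →L[ℝ] Y) {F : Y → StrongDual ℝ Y} (hF : Continuous F) :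
    Continuous (rieszPullback U F) :=
  (InnerProductSpace.toDual ℝ E).symm.continuous.comp (hF.clm_comp continuous_const)

lemma norm_rieszPullback_sub_le (U : E →L[ℝ] Y) {F F' : Y → StrongDual ℝ Y} {B : ℝ}
    (hB : ∀ u, ‖F u - F' u‖ ≤ B) (u : Y) :
    ‖rieszPullback U F u - rieszPullback U F' u‖ ≤ B * ‖U‖ := by
  rw [rieszPullback, rieszPullback, ← map_sub, LinearIsometryEquiv.norm_map,
    ← ContinuousLinearMap.sub_comp]
  exact (ContinuousLinearMap.opNorm_comp_le _ _).trans (by gcongr; exact hB u)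

lemma eq_rieszPullback_iff {U : E →L[ℝ] Y} {F : Y → StrongDual ℝ Y} {z : E} {u : Y} :
    z = rieszPullback U F u ↔ ∀ w, ⟪z, w⟫ = F u (U w) := by
  simp_rw [← inner_rieszPullback]
  exact ⟨fun h w => by rw [← h], ext_inner_right ℝ⟩

lemma energy_add_le (U : E →L[ℝ] Y) {Φ : Y → ℝ} {F : Y → StrongDual ℝ Y} {C : ℝ} (hC : 0 ≤ C)
    (hΦF : ∀ u v, Φ u + F u v - C * ‖v‖ ^ 2 ≤ Φ (u + v)) (z w : E) :
    ‖z + w‖ ^ 2 / 2 - Φ (U (z + w)) ≤ ‖z‖ ^ 2 / 2 - Φ (U z)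
      + ⟪z - rieszPullback U F (U z), w⟫ + (1 / 2 + C * ‖U‖ ^ 2) * ‖w‖ ^ 2 := by
  have hUw : C * ‖U w‖ ^ 2 ≤ C * (‖U‖ * ‖w‖) ^ 2 := by gcongr; exact U.le_opNorm w
  have h := hΦF (U z) (U w)
  rw [inner_sub_left, inner_rieszPullback, map_add, norm_add_sq_real]
  linarith

theorem exists_critical_point_of_barrier {U : E →L[ℝ] Y} (hU : IsCompactOperator U) {Φ : Y → ℝ}
    (hΦ : Continuous Φ) {F Fₕ : Y → StrongDual ℝ Y} (hF : Continuous F) {C : ℝ} (hC : 0 ≤ C)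
    (hΦF : ∀ u v, Φ u + F u v - C * ‖v‖ ^ 2 ≤ Φ (u + v)) (hFh : Continuous Fₕ)
    (hsmul : ∀ (s : ℝ) u, 0 ≤ s → Fₕ (s • u) = s • Fₕ u) {B : ℝ} (hB : ∀ u, ‖F u - Fₕ u‖ ≤ B)
    (hker : ∀ z, (∀ w, ⟪z, w⟫ = Fₕ (U z) (U w)) → z = 0)
    {r : E → ℝ} {α ρ : ℝ} (hr : Continuous r)
    (hbarrier : ∀ z, r z = ρ → α ≤ ‖z‖ ^ 2 / 2 - Φ (U z)) {z₀ z₁ : E}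
    (hJ₀ : ‖z₀‖ ^ 2 / 2 - Φ (U z₀) < α) (hr₀ : r z₀ < ρ)
    (hJ₁ : ‖z₁‖ ^ 2 / 2 - Φ (U z₁) < α) (hr₁ : ρ < r z₁) :
    ∃ z, (∀ w, ⟪z, w⟫ = F (U z) (U w)) ∧ α ≤ ‖z‖ ^ 2 / 2 - Φ (U z) := by
  have hJ : Continuous fun z => ‖z‖ ^ 2 / 2 - Φ (U z) := by fun_prop
  have hGF := continuous_rieszPullback U hF
  obtain ⟨z, hz, hlim⟩ := exists_tendsto_gradient_zero_of_barrier hJ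
    (continuous_id.sub (hGF.comp U.continuous)) hr (by positivity) (energy_add_le U hC hΦF)
    hbarrier hJ₀ hr₀ hJ₁ hr₁
  have hbounded := bddAbove_norm_of_asymptotically_homogeneous hU
    (continuous_rieszPullback U hFh) (fun s u hs => by
      simp only [rieszPullback, hsmul s u hs, ContinuousLinearMap.smul_comp, map_smulₛₗ]; rfl)
    (norm_rieszPullback_sub_le U hB) (fun z hz => hker z (eq_rieszPullback_iff.1 hz)) hlim
  obtain ⟨zLim, hfixed, φ, -, hφ⟩ := exists_subseq_tendsto_fixedPoint hU hGF hbounded hlim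
  exact ⟨zLim, eq_rieszPullback_iff.1 hfixed,
    ge_of_tendsto' ((hJ.tendsto zLim).comp hφ) fun n => hz (φ n)⟩

end CompactGradient

end MountainPass

section Nemytskii

open scoped NNReal

lemma abs_taylor_sub_le_of_lipschitzOnWith {h H : ℝ → ℝ} {D : Set ℝ} (hD : Convex ℝ D) {K : ℝ≥0}
    (hh : LipschitzOnWith K h D) (hH : ∀ s ∈ D, HasDerivAt H (h s) s) {s t : ℝ} (hs : s ∈ D)
    (ht : t ∈ D) : |H t - H s - h s * (t - s)| ≤ K * (t - s) ^ 2 := by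
  have hsub : uIcc s t ⊆ D := by rw [← segment_eq_uIcc]; exact hD.segment_subset hs ht
  have hderiv (x) (hx : x ∈ uIcc s t) :
      HasDerivWithinAt (fun y => H y - h s * y) (h x - h s) (uIcc s t) x := by
    simpa using ((hH x (hsub hx)).fun_sub ((hasDerivAt_id x).const_mul (h s))).hasDerivWithinAt
  have hbound (x) (hx : x ∈ uIcc s t) : ‖h x - h s‖ ≤ K * |t - s| :=
    (hh.norm_sub_le (hsub hx) hs).trans (by gcongr; exact abs_sub_left_of_mem_uIcc hx)
  have hmvt := (convex_uIcc s t).norm_image_sub_le_of_norm_hasDerivWithin_le hderiv hbound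
    left_mem_uIcc right_mem_uIcc
  calc |H t - H s - h s * (t - s)| = ‖H t - h s * t - (H s - h s * s)‖ := by
        rw [Real.norm_eq_abs]; ring_nf
    _ ≤ K * |t - s| * ‖t - s‖ := hmvt
    _ = K * (t - s) ^ 2 := by rw [Real.norm_eq_abs, mul_assoc, ← sq, sq_abs]

variable {X : Type*} [TopologicalSpace X] [CompactSpace X] (ℓ : StrongDual ℝ C(X, ℝ))

/-- The linear form `v ↦ ℓ (h(u) v)`: for a primitive `H` of `h`, it is the differential at `u` of
the functional `u ↦ ℓ (H(u))` on continuous functions. -/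
noncomputable def nemytskiiForm (h : C(ℝ, ℝ)) (u : C(X, ℝ)) : StrongDual ℝ C(X, ℝ) :=
  ℓ.comp (ContinuousLinearMap.mul ℝ C(X, ℝ) (h.comp u))

lemma nemytskiiForm_apply (h : C(ℝ, ℝ)) (u v : C(X, ℝ)) :
    nemytskiiForm ℓ h u v = ℓ (h.comp u * v) := rfl

lemma continuous_nemytskiiForm (h : C(ℝ, ℝ)) : Continuous (nemytskiiForm ℓ h) :=
  continuous_const.clm_comp
    ((ContinuousLinearMap.mul ℝ C(X, ℝ)).continuous.comp (ContinuousMap.continuous_postcomp h))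

lemma nemytskiiForm_smul {h : C(ℝ, ℝ)} {s : ℝ} (hs : ∀ r, h (s * r) = s * h r) (u : C(X, ℝ)) :
    nemytskiiForm ℓ h (s • u) = s • nemytskiiForm ℓ h u := by
  have hcomp : h.comp (s • u) = s • h.comp u := by ext x; simp [hs]
  ext v
  simp only [nemytskiiForm_apply, hcomp, smul_mul_assoc, map_smul, smul_apply]

lemma norm_nemytskiiForm_sub_le {h h' : C(ℝ, ℝ)} {B : ℝ} (hB : ∀ r, |h r - h' r| ≤ B)
    (u : C(X, ℝ)) : ‖nemytskiiForm ℓ h u - nemytskiiForm ℓ h' u‖ ≤ ‖ℓ‖ * B := by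
  have hB₀ : 0 ≤ B := (abs_nonneg _).trans (hB 0)
  refine ContinuousLinearMap.opNorm_le_bound _ (by positivity) fun v => ?_
  rw [sub_apply, nemytskiiForm_apply, nemytskiiForm_apply, ← map_sub,
    ← sub_mul, mul_assoc]
  refine ℓ.le_opNorm_of_le ((norm_mul_le _ _).trans ?_)
  gcongr
  exact (ContinuousMap.norm_le _ hB₀).2 fun x => hB (u x)

lemma abs_nemytskii_taylor_le {h H : C(ℝ, ℝ)} {K : ℝ≥0} (hh : LipschitzWith K h)
    (hH : ∀ s, HasDerivAt H (h s) s) (u v : C(X, ℝ)) :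
    |ℓ (H.comp (u + v)) - ℓ (H.comp u) - nemytskiiForm ℓ h u v| ≤ ‖ℓ‖ * K * ‖v‖ ^ 2 := by
  rw [nemytskiiForm_apply, ← map_sub, ← map_sub, ← Real.norm_eq_abs, mul_assoc]
  refine ℓ.le_opNorm_of_le ((ContinuousMap.norm_le _ (by positivity)).2 fun x => ?_)
  have htaylor := abs_taylor_sub_le_of_lipschitzOnWith convex_univ (hh.lipschitzOnWith (s := univ))
    (fun s _ => hH s) (mem_univ (u x)) (mem_univ (u x + v x))
  rw [add_sub_cancel_left] at htaylor
  refine htaylor.trans ?_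
  rw [← sq_abs]
  gcongr
  exact v.norm_coe_le_norm x

end Nemytskii

section NegativePart

lemma hasDerivAt_of_abs_sub_le_sq {f : ℝ → ℝ} {f' s C : ℝ}
    (hf : ∀ t, |f t - f s - f' * (t - s)| ≤ C * (t - s) ^ 2) : HasDerivAt f f' s := by
  rw [hasDerivAt_iff_isLittleO]
  have hO : (fun t => f t - f s - (t - s) • f') =O[nhds s] fun t => (t - s) ^ 2 :=
    Asymptotics.IsBigO.of_bound C (Eventually.of_forall fun t => by
      simpa [mul_comm f'] using hf t)
  refine hO.trans_isLittleO ?_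
  simpa using Asymptotics.isLittleO_pow_sub_sub s one_lt_two

lemma hasDerivAt_max_zero_sq_div_two (s : ℝ) :
    HasDerivAt (fun s : ℝ => max s 0 ^ 2 / 2) (max s 0) s := by
  refine hasDerivAt_of_abs_sub_le_sq (C := 1) fun t => abs_le.2 ?_
  rcases le_total s 0 with hs | hs <;> rcases le_total t 0 with ht | ht <;>
    simp only [max_eq_left, max_eq_right, hs, ht] <;> constructor <;> nlinarith

/-- The negative part `s ↦ s⁻`, the term added to the equation to force solutions to be
nonnegative. -/
def negPartMap : C(ℝ, ℝ) := ⟨fun s => max (-s) 0, by fun_prop⟩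

/-- The primitive `s ↦ -(s⁻)² / 2` of `negPartMap`. -/
noncomputable def negPartPrimitive : C(ℝ, ℝ) := ⟨fun s => -(max (-s) 0 ^ 2 / 2), by fun_prop⟩

lemma hasDerivAt_negPartPrimitive (s : ℝ) : HasDerivAt negPartPrimitive (negPartMap s) s := by
  refine (((hasDerivAt_max_zero_sq_div_two (-s)).comp s (hasDerivAt_neg s)).neg).congr_deriv ?_
  simp [negPartMap]

lemma lipschitzWith_negPartMap : LipschitzWith 1 negPartMap :=
  LipschitzWith.id.neg.max_const 0

end NegativePart

section Integrals

open intervalIntegral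

variable {T : ℝ}

lemma intervalIntegrable_of_continuousOn_Icc (hT : 0 ≤ T) {w : ℝ → ℝ}
    (hw : ContinuousOn w (Icc 0 T)) : IntervalIntegrable w volume 0 T :=
  ContinuousOn.intervalIntegrable (by rwa [uIcc_of_le hT])

lemma intervalIntegrable_mul_of_continuousOn_Icc (hT : 0 ≤ T) {a w : ℝ → ℝ}
    (ha : IntervalIntegrable a volume 0 T) (hw : ContinuousOn w (Icc 0 T)) :
    IntervalIntegrable (fun x => a x * w x) volume 0 T :=
  ha.mul_continuousOn (by rwa [uIcc_of_le hT])

lemma eqOn_zero_of_integral_nonpos (hT : 0 < T) {w : ℝ → ℝ} (hw : ContinuousOn w (Icc 0 T))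
    (hw₀ : ∀ x ∈ Icc 0 T, 0 ≤ w x) (hint : ∫ x in (0 : ℝ)..T, w x ≤ 0) :
    EqOn w 0 (Icc 0 T) := by
  intro x hx
  by_contra hwx
  exact hint.not_gt (integral_pos hT hw (fun y hy => hw₀ y (Ioc_subset_Icc_self hy))
    ⟨x, hx, (hw₀ x hx).lt_of_ne' hwx⟩)

lemma integral_eq_sub_of_hasDerivWithinAt_Icc {u u' : ℝ → ℝ}
    (hu : ∀ x ∈ Icc 0 T, HasDerivWithinAt u (u' x) (Icc 0 T) x) (hu' : ContinuousOn u' (Icc 0 T))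
    {x y : ℝ} (hx : x ∈ Icc 0 T) (hy : y ∈ Icc 0 T) : ∫ t in x..y, u' t = u y - u x := by
  have hsub : uIcc x y ⊆ Icc 0 T := ordConnected_Icc.uIcc_subset hx hy
  refine integral_eq_sub_of_hasDeriv_right
    (fun z hz => (hu z (hsub hz)).continuousWithinAt.mono hsub) (fun z hz => ?_)
    (hu'.mono hsub).intervalIntegrable
  have hz' : z ∈ Ioo 0 T :=
    ⟨(le_min hx.1 hy.1).trans_lt hz.1, hz.2.trans_le (max_le hx.2 hy.2)⟩
  exact ((hu z (Ioo_subset_Icc_self hz')).hasDerivAt (Icc_mem_nhds hz'.1 hz'.2)).hasDerivWithinAt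

lemma sub_le_integral_abs_of_hasDerivWithinAt_Icc {u u' : ℝ → ℝ}
    (hu : ∀ x ∈ Icc 0 T, HasDerivWithinAt u (u' x) (Icc 0 T) x) (hu' : ContinuousOn u' (Icc 0 T))
    {x y : ℝ} (hx : x ∈ Icc 0 T) (hy : y ∈ Icc 0 T) : u y - u x ≤ ∫ t in (0 : ℝ)..T, |u' t| := by
  have hT : 0 ≤ T := hx.1.trans hx.2
  have hsub : uIoc x y ⊆ uIoc 0 T := by
    rw [uIoc_of_le hT]
    exact Ioc_subset_Ioc (le_min hx.1 hy.1) (max_le hx.2 hy.2)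
  calc u y - u x = ∫ t in x..y, u' t :=
        (integral_eq_sub_of_hasDerivWithinAt_Icc hu hu' hx hy).symm
    _ ≤ |∫ t in x..y, (|u' t|)| :=
        (le_abs_self _).trans (norm_integral_le_abs_integral_norm (f := u'))
    _ ≤ |∫ t in (0 : ℝ)..T, (|u' t|)| :=
        abs_integral_mono_interval hsub (ae_of_all _ fun t => abs_nonneg _)
          (intervalIntegrable_of_continuousOn_Icc hT hu'.abs)
    _ = ∫ t in (0 : ℝ)..T, |u' t| := abs_of_nonneg (integral_nonneg hT fun t _ => abs_nonneg _)

lemma integral_mul_integral_right_eq {f q : ℝ → ℝ} {b c : ℝ} (hf : IntervalIntegrable f volume b c)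
    (hq : IntervalIntegrable q volume b c) :
    ∫ x in b..c, f x * (∫ t in b..x, q t) =
      (∫ x in b..c, f x) * (∫ x in b..c, q x) - ∫ x in b..c, q x * (∫ t in b..x, f t) := by
  have hparts := AbsolutelyContinuousOnInterval.integral_mul_deriv_eq_deriv_mul
    (hf.absolutelyContinuousOnInterval_intervalIntegral (c := b) left_mem_uIcc)
    (hq.absolutelyContinuousOnInterval_intervalIntegral (c := b) left_mem_uIcc)
  have hderiv {p w : ℝ → ℝ} (hp : IntervalIntegrable p volume b c) :
      ∫ x in b..c, deriv (fun x => ∫ t in b..x, p t) x * w x = ∫ x in b..c, p x * w x := by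
    refine integral_congr_ae ?_
    filter_upwards [hp.ae_hasDerivAt_integral] with x hx hx'
    rw [(hx (uIoc_subset_uIcc hx') b left_mem_uIcc).deriv]
  simp only [integral_same, mul_zero, sub_zero] at hparts
  rw [← hderiv hf, ← hderiv hq, eq_sub_iff_add_eq, ← eq_sub_iff_add_eq', ← hparts]
  exact integral_congr fun x _ => mul_comm _ _

end Integrals

/-- The boundary conditions under consideration. -/
inductive BoundaryCondition
  | neumann
  | periodic

namespace BoundaryCondition

/-- The boundary condition on `[0, T]` for a function `u` with derivative `u'`. -/
def Holds (T : ℝ) (u u' : ℝ → ℝ) : BoundaryCondition → Prop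
  | neumann => u' 0 = 0 ∧ u' T = 0
  | periodic => u 0 = u T ∧ u' 0 = u' T

lemma Holds.boundary_term_eq {B : BoundaryCondition} {T : ℝ} {u u' : ℝ → ℝ} (hB : B.Holds T u u')
    (ψ : ℝ → ℝ) : u' 0 * ψ (u 0) = u' T * ψ (u T) := by
  cases B with
  | neumann => rw [hB.1, hB.2, zero_mul, zero_mul]
  | periodic => rw [hB.1, hB.2]

lemma Holds.add_const {B : BoundaryCondition} {T : ℝ} {u u' : ℝ → ℝ} (hB : B.Holds T u u')
    (c : ℝ) : B.Holds T (fun x => u x + c) u' := by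
  cases B with
  | neumann => exact hB
  | periodic => exact ⟨congrArg (· + c) hB.1, hB.2⟩

end BoundaryCondition

namespace IsSolOn

open intervalIntegral

variable {T : ℝ} {f u u' : ℝ → ℝ}

lemma continuousOn (hu : IsSolOn T f u u') : ContinuousOn u (Icc 0 T) :=
  fun x hx => (hu.1 x hx).continuousWithinAt

lemma add_const (hu : IsSolOn T f u u') (c : ℝ) : IsSolOn T f (fun x => u x + c) u' :=
  ⟨fun x hx => (hu.1 x hx).add_const c, hu.2⟩

lemma deriv_sub_deriv (hu : IsSolOn T f u u') (hf : IntervalIntegrable f volume 0 T) {x y : ℝ}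
    (hx : x ∈ Icc 0 T) (hy : y ∈ Icc 0 T) : u' x - u' y = ∫ t in x..y, f t := by
  have hT : 0 ≤ T := hx.1.trans hx.2
  have hint {z : ℝ} (hz : z ∈ Icc 0 T) : IntervalIntegrable f volume 0 z :=
    hf.mono_set (by
      rw [uIcc_of_le hT, uIcc_of_le hz.1]; exact Icc_subset_Icc_right hz.2)
  rw [hu.2.2 x hx, hu.2.2 y hy, ← integral_interval_sub_left (hint hy) (hint hx)]
  ring

lemma integral_mul (hT : 0 ≤ T) (hu : IsSolOn T f u u') (hf : IntervalIntegrable f volume 0 T)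
    {φ φ' : ℝ → ℝ} (hφ : ∀ x ∈ Icc 0 T, HasDerivWithinAt φ (φ' x) (Icc 0 T) x)
    (hφ' : ContinuousOn φ' (Icc 0 T)) :
    ∫ x in (0 : ℝ)..T, f x * φ x = u' 0 * φ 0 - u' T * φ T + ∫ x in (0 : ℝ)..T, u' x * φ' x := by
  have h0 : (0 : ℝ) ∈ Icc 0 T := left_mem_Icc.2 hT
  have hφ'_int := intervalIntegrable_of_continuousOn_Icc hT hφ'
  have hφ_eq : ∀ x ∈ uIcc 0 T, f x * φ x = φ 0 * f x + f x * ∫ t in (0 : ℝ)..x, φ' t := by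
    intro x hx
    rw [integral_eq_sub_of_hasDerivWithinAt_Icc hφ hφ' h0 (uIcc_of_le hT ▸ hx)]
    ring
  have hu'_eq : ∀ x ∈ uIcc 0 T, φ' x * ∫ t in (0 : ℝ)..x, f t = u' 0 * φ' x - u' x * φ' x := by
    intro x hx
    rw [← hu.deriv_sub_deriv hf h0 (uIcc_of_le hT ▸ hx)]
    ring
  have hprim : ContinuousOn (fun x => ∫ t in (0 : ℝ)..x, φ' t) (uIcc 0 T) :=
    continuousOn_primitive_interval' hφ'_int left_mem_uIcc
  have hu'φ'_int : IntervalIntegrable (fun x => u' x * φ' x) volume 0 T :=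
    intervalIntegrable_of_continuousOn_Icc hT (hu.2.1.mul hφ')
  rw [integral_congr hφ_eq, integral_add (hf.const_mul _) (hf.mul_continuousOn hprim),
    integral_mul_integral_right_eq hf hφ'_int, integral_congr hu'_eq,
    integral_sub (hφ'_int.const_mul _) hu'φ'_int,
    intervalIntegral.integral_const_mul, intervalIntegral.integral_const_mul,
    integral_eq_sub_of_hasDerivWithinAt_Icc hφ hφ' h0 (right_mem_Icc.2 hT),
    ← hu.deriv_sub_deriv hf h0 (right_mem_Icc.2 hT)]
  ring

lemma integral_mul_comp (hT : 0 ≤ T) (hu : IsSolOn T f u u') (hf : IntervalIntegrable f volume 0 T)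
    {B : BoundaryCondition} (hB : B.Holds T u u') {ψ ψ' : ℝ → ℝ}
    (hψ : ∀ x ∈ Icc 0 T, HasDerivAt ψ (ψ' (u x)) (u x))
    (hψ' : ContinuousOn (fun x => ψ' (u x)) (Icc 0 T)) :
    ∫ x in (0 : ℝ)..T, f x * ψ (u x) = ∫ x in (0 : ℝ)..T, ψ' (u x) * u' x ^ 2 := by
  rw [hu.integral_mul hT hf (φ := fun x => ψ (u x))
    (fun x hx => (hψ x hx).comp_hasDerivWithinAt x (hu.1 x hx)) (hψ'.mul hu.2.1),
    hB.boundary_term_eq, sub_self, zero_add]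
  exact integral_congr fun x _ => by ring

end IsSolOn

section Positivity

variable {T : ℝ} {a h u u' : ℝ → ℝ} {B : BoundaryCondition}

lemma IsSolOn.nonneg_of_eqOn_zero (hT : 0 < T) (ha : IntervalIntegrable a volume 0 T)
    (hh : Continuous h) (hh₀ : EqOn h 0 (Iic 0)) (hB : B.Holds T u u')
    (hu : IsSolOn T (fun t => a t * h (u t) + negPartMap (u t)) u u') :
    ∀ x ∈ Icc 0 T, 0 ≤ u x := by
  have hneg : ContinuousOn (fun x => negPartMap (u x)) (Icc 0 T) :=
    negPartMap.continuous.comp_continuousOn hu.continuousOn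
  have htest := hu.integral_mul_comp hT.le
    ((intervalIntegrable_mul_of_continuousOn_Icc hT.le ha
      (hh.comp_continuousOn hu.continuousOn)).add
        (intervalIntegrable_of_continuousOn_Icc hT.le hneg)) hB
    (fun x _ => hasDerivAt_negPartPrimitive (u x)) hneg
  have hcube (x : ℝ) : (a x * h (u x) + negPartMap (u x)) * negPartPrimitive (u x) =
      -(negPartMap (u x) ^ 3 / 2) := by
    rcases le_total (u x) 0 with hx | hx
    · rw [hh₀ hx]
      simp only [negPartMap, negPartPrimitive, ContinuousMap.coe_mk, Pi.zero_apply]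
      ring
    · simp [negPartMap, negPartPrimitive, hx]
  rw [intervalIntegral.integral_congr fun x _ => hcube x, intervalIntegral.integral_neg] at htest
  have hzero := eqOn_zero_of_integral_nonpos hT ((hneg.pow 3).div_const 2)
    (fun x _ => div_nonneg (pow_nonneg (le_max_right _ _) 3) two_pos.le)
    (neg_nonneg.1 (htest ▸ intervalIntegral.integral_nonneg hT.le
      fun x _ => mul_nonneg (le_max_right _ _) (sq_nonneg _)))
  intro x hx
  have hx₀ : max (-u x) 0 = 0 := by simpa [negPartMap] using hzero hx
  simpa using hx₀

lemma IsSolOn.integral_logDeriv_sq_le {f b v v' : ℝ → ℝ} (hT : 0 ≤ T) (hv : IsSolOn T f v v')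
    (hf : IntervalIntegrable f volume 0 T) (hB : B.Holds T v v') (hpos : ∀ x ∈ Icc 0 T, 0 < v x)
    (hb : IntervalIntegrable b volume 0 T) (hfb : ∀ x ∈ Icc 0 T, -f x ≤ b x * v x) :
    ∫ x in (0 : ℝ)..T, (v' x / v x) ^ 2 ≤ ∫ x in (0 : ℝ)..T, b x := by
  have hv_inv : ContinuousOn (fun x => (v x)⁻¹) (Icc 0 T) :=
    hv.continuousOn.inv₀ fun x hx => (hpos x hx).ne'
  calc ∫ x in (0 : ℝ)..T, (v' x / v x) ^ 2
      = ∫ x in (0 : ℝ)..T, (v x)⁻¹ ^ 2 * v' x ^ 2 :=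
        intervalIntegral.integral_congr fun x _ => by
          simp only [div_eq_mul_inv, mul_pow, mul_comm]
    _ = ∫ x in (0 : ℝ)..T, f x * -(v x)⁻¹ := by
        refine (hv.integral_mul_comp hT hf hB (ψ := fun s => -s⁻¹) (ψ' := fun s => s⁻¹ ^ 2)
          (fun x hx => ?_) (hv_inv.pow 2)).symm
        simpa using (hasDerivAt_inv (hpos x hx).ne').fun_neg
    _ ≤ ∫ x in (0 : ℝ)..T, b x := by
        refine intervalIntegral.integral_mono_on hT
          (intervalIntegrable_mul_of_continuousOn_Icc hT hf hv_inv.neg) hb fun x hx => ?_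
        rw [mul_neg, ← neg_mul, ← div_eq_mul_inv, div_le_iff₀ (hpos x hx)]
        exact hfb x hx

lemma IsSolOn.le_exp_mul {f b v v' : ℝ → ℝ} (hv : IsSolOn T f v v')
    (hf : IntervalIntegrable f volume 0 T) (hB : B.Holds T v v') (hpos : ∀ x ∈ Icc 0 T, 0 < v x)
    (hb : IntervalIntegrable b volume 0 T) (hfb : ∀ x ∈ Icc 0 T, -f x ≤ b x * v x) {x y : ℝ}
    (hx : x ∈ Icc 0 T) (hy : y ∈ Icc 0 T) :
    v x ≤ Real.exp ((T + ∫ t in (0 : ℝ)..T, b t) / 2) * v y := by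
  have hT : 0 ≤ T := hx.1.trans hx.2
  have hq : ContinuousOn (fun t => v' t / v t) (Icc 0 T) :=
    hv.2.1.div hv.continuousOn fun t ht => (hpos t ht).ne'
  have hq_sq_int : IntervalIntegrable (fun t => (v' t / v t) ^ 2) volume 0 T :=
    intervalIntegrable_of_continuousOn_Icc hT (hq.pow 2)
  have hlog : Real.log (v x) - Real.log (v y) ≤ (T + ∫ t in (0 : ℝ)..T, b t) / 2 := by
    calc Real.log (v x) - Real.log (v y) ≤ ∫ t in (0 : ℝ)..T, |v' t / v t| :=
          sub_le_integral_abs_of_hasDerivWithinAt_Icc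
            (fun t ht => (hv.1 t ht).log (hpos t ht).ne') hq hy hx
      _ ≤ ∫ t in (0 : ℝ)..T, (1 + (v' t / v t) ^ 2) / 2 :=
          intervalIntegral.integral_mono_on hT (intervalIntegrable_of_continuousOn_Icc hT hq.abs)
            ((intervalIntegrable_const.add hq_sq_int).div_const 2) fun t _ => by
              nlinarith [sq_nonneg (|v' t / v t| - 1), sq_abs (v' t / v t)]
      _ = (T + ∫ t in (0 : ℝ)..T, (v' t / v t) ^ 2) / 2 := by
          rw [intervalIntegral.integral_div,
            intervalIntegral.integral_add intervalIntegrable_const hq_sq_int]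
          simp
      _ ≤ (T + ∫ t in (0 : ℝ)..T, b t) / 2 := by
          gcongr
          exact hv.integral_logDeriv_sq_le hT hf hB hpos hb hfb
  rw [← Real.log_div (hpos x hx).ne' (hpos y hy).ne',
    Real.log_le_iff_le_exp (div_pos (hpos x hx) (hpos y hy)), div_le_iff₀ (hpos y hy)] at hlog
  exact hlog

lemma IsSolOn.pos_of_nonneg {K : ℝ} (ha : IntervalIntegrable a volume 0 T)
    (hh : Continuous h) (hhK : ∀ s, 0 ≤ s → |h s| ≤ K * s) (hB : B.Holds T u u')
    (hu : IsSolOn T (fun t => a t * h (u t)) u u') (hnonneg : ∀ x ∈ Icc 0 T, 0 ≤ u x)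
    {x : ℝ} (hx : x ∈ Icc 0 T) (hux : u x ≠ 0) : ∀ y ∈ Icc 0 T, 0 < u y := by
  have hT : 0 ≤ T := hx.1.trans hx.2
  have hb : IntervalIntegrable (fun t => |a t| * K) volume 0 T := ha.abs.mul_const K
  have hK : 0 ≤ K := by simpa using (abs_nonneg _).trans (hhK 1 zero_le_one)
  set A : ℝ := Real.exp ((T + ∫ t in (0 : ℝ)..T, |a t| * K) / 2)
  -- The Harnack inequality, applied to the positive function `u + ε`.
  have hharnack (y) (hy : y ∈ Icc 0 T) (ε : ℝ) (hε : 0 < ε) : u x ≤ A * (u y + ε) := by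
    refine (le_add_of_nonneg_right hε.le).trans ((hu.add_const ε).le_exp_mul
      (intervalIntegrable_mul_of_continuousOn_Icc hT ha (hh.comp_continuousOn hu.continuousOn))
      (hB.add_const ε) (fun t ht => add_pos_of_nonneg_of_pos (hnonneg t ht) hε) hb
      (fun t ht => ?_) hx hy)
    calc -(a t * h (u t)) ≤ |a t| * |h (u t)| := (neg_le_abs _).trans_eq (abs_mul _ _)
      _ ≤ |a t| * (K * (u t + ε)) := by
          gcongr
          exact (hhK _ (hnonneg t ht)).trans (by gcongr; exact le_add_of_nonneg_right hε.le)
      _ = |a t| * K * (u t + ε) := (mul_assoc _ _ _).symm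
  intro y hy
  have hA : 0 < A := Real.exp_pos _
  have hux_pos : 0 < u x := (hnonneg x hx).lt_of_ne' hux
  have hle := hharnack y hy (u x / (2 * A)) (by positivity)
  have hmul : A * (u x / (2 * A)) = u x / 2 := by field_simp
  rw [mul_add, hmul] at hle
  exact pos_of_mul_pos_right (by linarith) hA.le

end Positivity

section Bump

variable {T σ τ : ℝ}

/-- A nonnegative `C¹` function that is positive exactly on `(σ, τ)`, used as a test function. -/
noncomputable def bump (σ τ x : ℝ) : ℝ := max ((x - σ) * (τ - x)) 0 ^ 2 / 2

/-- The derivative of `bump`. -/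
noncomputable def bumpDeriv (σ τ x : ℝ) : ℝ := max ((x - σ) * (τ - x)) 0 * (σ + τ - 2 * x)

lemma hasDerivAt_bump (σ τ x : ℝ) : HasDerivAt (bump σ τ) (bumpDeriv σ τ x) x := by
  have hquad : HasDerivAt (fun y => (y - σ) * (τ - y)) (σ + τ - 2 * x) x :=
    (((hasDerivAt_id x).sub_const σ).fun_mul ((hasDerivAt_id x).const_sub τ)).congr_deriv
      (by simp only [id_eq]; ring)
  exact (hasDerivAt_max_zero_sq_div_two _).comp x hquad

lemma continuous_bumpDeriv (σ τ : ℝ) : Continuous (bumpDeriv σ τ) := by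
  unfold bumpDeriv
  fun_prop

lemma continuous_bump (σ τ : ℝ) : Continuous (bump σ τ) :=
  continuous_iff_continuousAt.2 fun x => (hasDerivAt_bump σ τ x).continuousAt

lemma bump_nonneg (σ τ x : ℝ) : 0 ≤ bump σ τ x := by
  unfold bump
  positivity

lemma bump_pos {x : ℝ} (hx : x ∈ Ioo σ τ) : 0 < bump σ τ x := by
  have : 0 < (x - σ) * (τ - x) := mul_pos (sub_pos.2 hx.1) (sub_pos.2 hx.2)
  unfold bump
  positivity

lemma bump_eq_zero (h : σ ≤ τ) {x : ℝ} (hx : x ∉ Ioo σ τ) : bump σ τ x = 0 := by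
  have : (x - σ) * (τ - x) ≤ 0 := by
    rcases le_or_gt x σ with hσ | hσ
    · exact mul_nonpos_of_nonpos_of_nonneg (by linarith) (by linarith)
    · have hτ : τ ≤ x := not_lt.1 fun hτ => hx ⟨hσ, hτ⟩
      exact mul_nonpos_of_nonneg_of_nonpos (by linarith) (by linarith)
  simp [bump, this]

/-- A subinterval `[σ, τ]` of `[0, T]` on which the weight `a` is nonnegative and not a.e. zero. -/
structure IsPositivityInterval (T : ℝ) (a : ℝ → ℝ) (σ τ : ℝ) : Prop where
  le : σ ≤ τ
  subset : Icc σ τ ⊆ Icc 0 T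
  ae_nonneg : ∀ᵐ x ∂volume.restrict (Icc σ τ), 0 ≤ a x
  not_ae_eq_zero : ¬∀ᵐ x ∂volume.restrict (Icc σ τ), a x = 0

namespace IsPositivityInterval

variable {a : ℝ → ℝ}

lemma integral_mul_pos (hI : IsPositivityInterval T a σ τ) (ha : IntervalIntegrable a volume 0 T)
    {φ : ℝ → ℝ} (hφ : Continuous φ) (hφ_pos : ∀ x ∈ Ioo σ τ, 0 < φ x)
    (hφ_zero : ∀ x ∉ Ioo σ τ, φ x = 0) : 0 < ∫ x in (0 : ℝ)..T, a x * φ x := by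
  obtain ⟨hσ, hτ⟩ := (Icc_subset_Icc_iff hI.le).1 hI.subset
  have hT : 0 ≤ T := hσ.trans (hI.le.trans hτ)
  have hint : IntegrableOn (fun x => a x * φ x) (Ioc 0 T) :=
    ((intervalIntegrable_mul_of_continuousOn_Icc hT ha hφ.continuousOn).1)
  have hprod_nonneg : ∀ᵐ x ∂volume.restrict (Ioc 0 T), 0 ≤ a x * φ x := by
    refine ae_restrict_of_ae ?_
    filter_upwards [(ae_restrict_iff' measurableSet_Icc).1 hI.ae_nonneg] with x hx
    by_cases hxI : x ∈ Ioo σ τ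
    · exact mul_nonneg (hx (Ioo_subset_Icc_self hxI)) (hφ_pos x hxI).le
    · rw [hφ_zero x hxI, mul_zero]
  rw [intervalIntegral.integral_of_le hT]
  refine (integral_nonneg_of_ae hprod_nonneg).lt_of_ne' fun hzero => hI.not_ae_eq_zero ?_
  have hprod_zero := ae_restrict_of_ae_restrict_of_subset
    (fun x hx => ⟨hσ.trans_lt hx.1, hx.2.le.trans hτ⟩ : Ioo σ τ ⊆ Ioc 0 T)
    ((setIntegral_eq_zero_iff_of_nonneg_ae hprod_nonneg hint).1 hzero)
  rw [← Measure.restrict_congr_set Ioo_ae_eq_Icc]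
  filter_upwards [hprod_zero, ae_restrict_mem measurableSet_Ioo] with x hx hxI
  exact (mul_eq_zero.1 hx).resolve_right (hφ_pos x hxI).ne'

lemma exists_shrink (hI : IsPositivityInterval T a σ τ) :
    ∃ δ > 0, IsPositivityInterval T a (σ + δ) (τ - δ) := by
  suffices ∃ δ > 0, ¬∀ᵐ x ∂volume.restrict (Icc (σ + δ) (τ - δ)), a x = 0 by
    obtain ⟨δ, hδ, hne⟩ := this
    have hsub : Icc (σ + δ) (τ - δ) ⊆ Icc σ τ := Icc_subset_Icc (by linarith) (by linarith)
    refine ⟨δ, hδ, not_lt.1 fun hlt => hne ?_, hsub.trans hI.subset,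
      ae_restrict_of_ae_restrict_of_subset hsub hI.ae_nonneg, hne⟩
    simp [Icc_eq_empty hlt.not_ge]
  by_contra! hzero
  refine hI.not_ae_eq_zero ?_
  have hcover : Ioo σ τ ⊆ ⋃ n : ℕ, Icc (σ + 1 / (n + 1)) (τ - 1 / (n + 1)) := by
    intro x hx
    obtain ⟨n, hn⟩ := exists_nat_one_div_lt (lt_min (sub_pos.2 hx.1) (sub_pos.2 hx.2))
    exact mem_iUnion.2 ⟨n, by linarith [hn.trans_le (min_le_left _ _)],
      by linarith [hn.trans_le (min_le_right _ _)]⟩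
  rw [← Measure.restrict_congr_set Ioo_ae_eq_Icc]
  exact ae_restrict_of_ae_restrict_of_subset hcover
    ((ae_restrict_iUnion_iff _ _).2 fun n => hzero _ Nat.one_div_pos_of_nat)

lemma integral_mul_bump_pos (hI : IsPositivityInterval T a σ τ)
    (ha : IntervalIntegrable a volume 0 T) : 0 < ∫ x in (0 : ℝ)..T, a x * bump σ τ x :=
  hI.integral_mul_pos ha (continuous_bump σ τ) (fun _ => bump_pos) (fun _ => bump_eq_zero hI.le)

lemma eventually_integral_bumpDeriv_sq_lt (hI : IsPositivityInterval T a σ τ)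
    (ha : IntervalIntegrable a volume 0 T) :
    ∀ᶠ M in atTop, ∫ x in (0 : ℝ)..T, bumpDeriv σ τ x ^ 2 <
      M * ∫ x in (0 : ℝ)..T, a x * bump σ τ x ^ 2 :=
  (tendsto_id.atTop_mul_const (hI.integral_mul_pos ha ((continuous_bump σ τ).pow 2)
    (fun x hx => pow_pos (bump_pos hx) 2)
    (fun x hx => by simp [bump_eq_zero hI.le hx]))).eventually_gt_atTop _

lemma bump_zero (hI : IsPositivityInterval T a σ τ) : bump σ τ 0 = 0 :=
  bump_eq_zero hI.le fun h => (hI.subset (left_mem_Icc.2 hI.le)).1.not_gt h.1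

lemma bump_right (hI : IsPositivityInterval T a σ τ) : bump σ τ T = 0 :=
  bump_eq_zero hI.le fun h => (hI.subset (right_mem_Icc.2 hI.le)).2.not_gt h.2

end IsPositivityInterval

end Bump

section AprioriBound

variable {T : ℝ} {a h u u' : ℝ → ℝ} {B : BoundaryCondition}

-- Picone's identity: the integrand `v' (w² / v)'` equals `w'² - (w' - w v' / v)²`.
lemma IsSolOn.integral_mul_sq_div_le {f v v' w w' : ℝ → ℝ} (hT : 0 ≤ T) (hv : IsSolOn T f v v')
    (hf : IntervalIntegrable f volume 0 T) (hpos : ∀ x ∈ Icc 0 T, 0 < v x)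
    (hw : ∀ x, HasDerivAt w (w' x) x) (hw' : Continuous w') (hw₀ : w 0 = 0) (hwT : w T = 0) :
    ∫ x in (0 : ℝ)..T, f x * (w x ^ 2 / v x) ≤ ∫ x in (0 : ℝ)..T, w' x ^ 2 := by
  have hw_cont : Continuous w := continuous_iff_continuousAt.2 fun x => (hw x).continuousAt
  have hφ' : ContinuousOn (fun x => (2 * w x * w' x * v x - w x ^ 2 * v' x) / v x ^ 2)
      (Icc 0 T) :=
    (((by fun_prop : Continuous fun x => 2 * w x * w' x).continuousOn.mul hv.continuousOn).sub
      ((hw_cont.pow 2).continuousOn.mul hv.2.1)).div (hv.continuousOn.pow 2)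
      fun x hx => pow_ne_zero 2 (hpos x hx).ne'
  rw [hv.integral_mul hT hf (φ := fun x => w x ^ 2 / v x) (fun x hx =>
    (((hw x).hasDerivWithinAt.fun_pow 2).fun_div (hv.1 x hx) (hpos x hx).ne').congr_deriv
      (by simp)) hφ', hw₀, hwT]
  simp only [ne_eq, OfNat.ofNat_ne_zero, not_false_eq_true, zero_pow, zero_div, mul_zero, sub_self,
    zero_add]
  refine intervalIntegral.integral_mono_on hT
    (intervalIntegrable_of_continuousOn_Icc hT (hv.2.1.mul hφ'))
    ((hw'.pow 2).intervalIntegrable 0 T) fun x hx => ?_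
  have hvx := (hpos x hx).ne'
  calc v' x * ((2 * w x * w' x * v x - w x ^ 2 * v' x) / v x ^ 2)
      = w' x ^ 2 - (w' x - w x * v' x / v x) ^ 2 := by field_simp; ring
    _ ≤ w' x ^ 2 := sub_le_self _ (sq_nonneg _)

lemma mul_le_mul_of_concaveOn {σ τ δ : ℝ} {f : ℝ → ℝ} (hf : ConcaveOn ℝ (Icc σ τ) f)
    (hf₀ : ∀ x ∈ Icc σ τ, 0 ≤ f x) (hδ : 0 < δ) {x y : ℝ} (hx : x ∈ Icc σ τ)
    (hy : y ∈ Icc (σ + δ) (τ - δ)) : δ * f x ≤ (τ - σ) * f y := by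
  have hστ : 0 < τ - σ := by linarith [hy.1.trans hy.2]
  set c : ℝ := δ / (τ - σ)
  have hc : c * (τ - σ) = δ := div_mul_cancel₀ _ hστ.ne'
  have hc₀ : 0 < c := div_pos hδ hστ
  have hc₁ : 0 < 1 - c := by
    rw [sub_pos, div_lt_one hστ]
    linarith [hy.1.trans hy.2]
  have hz : (y - c * x) / (1 - c) ∈ Icc σ τ := by
    rw [mem_Icc, le_div_iff₀ hc₁, div_le_iff₀ hc₁]
    constructor <;> nlinarith [hy.1, hy.2, mul_le_mul_of_nonneg_left hx.1 hc₀.le,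
      mul_le_mul_of_nonneg_left hx.2 hc₀.le]
  have hconc := hf.2 hx hz hc₀.le hc₁.le (add_sub_cancel _ _)
  simp only [smul_eq_mul, mul_div_cancel₀ _ hc₁.ne', add_sub_cancel] at hconc
  calc δ * f x = (τ - σ) * (c * f x) := by rw [← mul_assoc, mul_comm (τ - σ), hc]
    _ ≤ (τ - σ) * f y := by
        gcongr
        exact (le_add_of_nonneg_right (mul_nonneg hc₁.le (hf₀ _ hz))).trans hconc

lemma IsSolOn.concaveOn {f : ℝ → ℝ} {σ τ : ℝ} (hu : IsSolOn T f u u')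
    (hf : IntervalIntegrable f volume 0 T) (hsub : Icc σ τ ⊆ Icc 0 T)
    (hf_nonneg : ∀ᵐ x ∂volume.restrict (Icc σ τ), 0 ≤ f x) : ConcaveOn ℝ (Icc σ τ) u := by
  have hderiv (x) (hx : x ∈ interior (Icc σ τ)) : HasDerivAt u (u' x) x :=
    (hu.1 x (hsub (interior_subset hx))).hasDerivAt
      (mem_of_superset (isOpen_interior.mem_nhds hx) (interior_subset.trans hsub))
  refine AntitoneOn.concaveOn_of_deriv (convex_Icc σ τ) (hu.continuousOn.mono hsub)
    (fun x hx => (hderiv x hx).differentiableAt.differentiableWithinAt) fun x hx y hy hxy => ?_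
  have hxI := interior_subset hx
  have hyI := interior_subset hy
  rw [(hderiv x hx).deriv, (hderiv y hy).deriv, ← sub_nonneg,
    hu.deriv_sub_deriv hf (hsub hxI) (hsub hyI)]
  exact intervalIntegral.integral_nonneg_of_ae_restrict hxy
    (ae_restrict_of_ae_restrict_of_subset (Icc_subset_Icc hxI.1 hyI.2) hf_nonneg)

/-- `u`, with derivative `u'`, is a positive solution of `u'' + a(x) h(u) = 0` on `[0, T]`
satisfying the boundary condition `B`. -/
structure BoundaryCondition.IsPosSol (B : BoundaryCondition) (T : ℝ) (a h u u' : ℝ → ℝ) :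
    Prop where
  isSolOn : IsSolOn T (fun t => a t * h (u t)) u u'
  pos : ∀ x ∈ Icc 0 T, 0 < u x
  holds : B.Holds T u u'

lemma IsSolOn.intervalIntegrable_rhs {f : ℝ → ℝ} (hu : IsSolOn T f u u') (hT : 0 ≤ T)
    (ha : IntervalIntegrable a volume 0 T) (hh : Continuous h) :
    IntervalIntegrable (fun t => a t * h (u t)) volume 0 T :=
  intervalIntegrable_mul_of_continuousOn_Icc hT ha (hh.comp_continuousOn hu.continuousOn)

lemma IsPositivityInterval.exists_lt {σ τ : ℝ} (hI : IsPositivityInterval T a σ τ) (hT : 0 ≤ T)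
    (ha : IntervalIntegrable a volume 0 T) (hh : Continuous h) {M R : ℝ}
    (hM : ∀ s, R ≤ s → M * s ≤ h s)
    (hlt : ∫ x in (0 : ℝ)..T, bumpDeriv σ τ x ^ 2 < M * ∫ x in (0 : ℝ)..T, a x * bump σ τ x ^ 2)
    (hu : B.IsPosSol T a h u u') : ∃ y ∈ Icc σ τ, u y < R := by
  by_contra! hge
  have hint := hu.isSolOn.intervalIntegrable_rhs hT ha hh
  have hw : ContinuousOn (fun x => bump σ τ x ^ 2) (Icc 0 T) :=
    ((continuous_bump σ τ).pow 2).continuousOn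
  refine hlt.not_ge (le_trans ?_ (hu.isSolOn.integral_mul_sq_div_le hT hint hu.pos
    (hasDerivAt_bump σ τ) (continuous_bumpDeriv σ τ) hI.bump_zero hI.bump_right))
  rw [← intervalIntegral.integral_const_mul]
  refine intervalIntegral.integral_mono_ae hT
    ((intervalIntegrable_mul_of_continuousOn_Icc hT ha hw).const_mul M)
    (intervalIntegrable_mul_of_continuousOn_Icc hT hint
      (hw.div hu.isSolOn.continuousOn fun x hx => (hu.pos x hx).ne')) ?_
  filter_upwards [(ae_restrict_iff' measurableSet_Icc).1 hI.ae_nonneg] with x hax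
  by_cases hx : x ∈ Icc σ τ
  · have hux := hu.pos x (hI.subset hx)
    calc M * (a x * bump σ τ x ^ 2) = a x * (M * u x) * (bump σ τ x ^ 2 / u x) := by field_simp
      _ ≤ a x * h (u x) * (bump σ τ x ^ 2 / u x) := by
          have := hax hx
          gcongr
          exact hM _ (hge x hx)
  · simp [bump_eq_zero hI.le fun hx' => hx (Ioo_subset_Icc_self hx')]

/-- The positive solutions of `u'' + a(x) h(u) = 0` are at most `C * R` on `S` as soon as the
nonnegative nonlinearity `h` satisfies `h s ≥ M s` for `s ≥ R`. -/
def HasAprioriBound (T : ℝ) (a : ℝ → ℝ) (S : Set ℝ) (C M : ℝ) : Prop :=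
  ∀ ⦃B : BoundaryCondition⦄ ⦃h u u' : ℝ → ℝ⦄ ⦃R : ℝ⦄, Continuous h → (∀ s, 0 ≤ s → 0 ≤ h s) →
    0 < R → (∀ s, R ≤ s → M * s ≤ h s) → B.IsPosSol T a h u u' → ∀ x ∈ S, u x ≤ C * R

lemma HasAprioriBound.mono {S : Set ℝ} {C C' M : ℝ} (hC : C ≤ C')
    (hb : HasAprioriBound T a S C M) : HasAprioriBound T a S C' M :=
  fun _ _ _ _ _ hh hh₀ hR hM hu x hx =>
    (hb hh hh₀ hR hM hu x hx).trans (mul_le_mul_of_nonneg_right hC hR.le)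

lemma IsPositivityInterval.exists_eventually_hasAprioriBound {σ τ : ℝ}
    (hI : IsPositivityInterval T a σ τ) (hT : 0 ≤ T) (ha : IntervalIntegrable a volume 0 T) :
    ∃ C, ∀ᶠ M in atTop, HasAprioriBound T a (Icc σ τ) C M := by
  obtain ⟨δ, hδ, hIδ⟩ := hI.exists_shrink
  refine ⟨(τ - σ) / δ, (hIδ.eventually_integral_bumpDeriv_sq_lt ha).mono
    fun M hlt B h u u' R hh hh₀ _ hM hu x hx => ?_⟩
  obtain ⟨y, hy, huy⟩ := hIδ.exists_lt hT ha hh hM hlt hu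
  have hpos : ∀ z ∈ Icc σ τ, 0 ≤ u z := fun z hz => (hu.pos z (hI.subset hz)).le
  have hconc : ConcaveOn ℝ (Icc σ τ) u := by
    refine hu.isSolOn.concaveOn (hu.isSolOn.intervalIntegrable_rhs hT ha hh) hI.subset ?_
    filter_upwards [hI.ae_nonneg, ae_restrict_mem measurableSet_Icc] with z haz hz
    exact mul_nonneg haz (hh₀ _ (hpos z hz))
  rw [div_mul_eq_mul_div, le_div_iff₀ hδ, mul_comm]
  refine (mul_le_mul_of_concaveOn hconc hpos hδ hx hy).trans ?_
  gcongr
  exact sub_nonneg.2 hI.le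

lemma BoundaryCondition.IsPosSol.le_of_forall_mem_le (hu : B.IsPosSol T a h u u') (hT : 0 < T)
    (ha : IntervalIntegrable a volume 0 T) (hh : Continuous h) (hh₀ : ∀ s, 0 ≤ s → 0 ≤ h s)
    {S : Set ℝ} (hS : MeasurableSet S) (haS : ∀ᵐ x ∂volume.restrict (Icc 0 T \ S), a x ≤ 0)
    {P x₀ : ℝ} (hx₀ : x₀ ∈ Icc 0 T) (hx₀S : x₀ ∈ S) (hP : ∀ x ∈ S, u x ≤ P) :
    ∀ x ∈ Icc 0 T, u x ≤ P := by
  have hψ (s : ℝ) : HasDerivAt (fun s => max (s - P) 0 ^ 2 / 2) (max (s - P) 0) s :=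
    (hasDerivAt_max_zero_sq_div_two (s - P)).comp_sub_const s P
  have hψ' : ContinuousOn (fun x => max (u x - P) 0) (Icc 0 T) :=
    (by fun_prop : Continuous fun s : ℝ => max (s - P) 0).comp_continuousOn hu.isSolOn.continuousOn
  have hnonpos : ∫ x in (0 : ℝ)..T, max (u x - P) 0 * u' x ^ 2 ≤ 0 := by
    rw [← hu.isSolOn.integral_mul_comp (ψ' := fun s => max (s - P) 0) hT.le
      (hu.isSolOn.intervalIntegrable_rhs hT.le ha hh) hu.holds (fun x _ => hψ (u x)) hψ',
      intervalIntegral.integral_of_le hT.le,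
      ← integral_Icc_eq_integral_Ioc]
    refine setIntegral_nonpos_of_ae_restrict ?_
    rw [EventuallyLE, ae_restrict_iff' measurableSet_Icc]
    filter_upwards [(ae_restrict_iff' (measurableSet_Icc.diff hS)).1 haS] with x hax hx
    by_cases hxS : x ∈ S
    · simp [hP x hxS]
    · exact mul_nonpos_of_nonpos_of_nonneg
        (mul_nonpos_of_nonpos_of_nonneg (hax ⟨hx, hxS⟩) (hh₀ _ (hu.pos x hx).le)) (by positivity)
  have hzero := eqOn_zero_of_integral_nonpos hT (hψ'.mul (hu.isSolOn.2.1.pow 2))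
    (fun x _ => mul_nonneg (le_max_right _ _) (sq_nonneg _)) hnonpos
  intro x hx
  have hconst := integral_eq_sub_of_hasDerivWithinAt_Icc
    (fun y hy => (hψ (u y)).comp_hasDerivWithinAt y (hu.isSolOn.1 y hy)) (hψ'.mul hu.isSolOn.2.1)
    hx₀ hx
  rw [intervalIntegral.integral_congr (g := 0) fun y hy => ?_] at hconst
  · simpa [hP x₀ hx₀S, sub_nonpos] using hconst.symm
  · simpa [or_comm] using hzero (ordConnected_Icc.uIcc_subset hx₀ hx hy)

lemma CondA1.exists_isPositivityInterval (ha1 : CondA1 T a) :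
    ∃ (m : ℕ) (σ τ : Fin m → ℝ), 0 < m ∧ (∀ i, IsPositivityInterval T a (σ i) (τ i)) ∧
      ∀ᵐ x ∂volume.restrict (Icc 0 T \ ⋃ i, Icc (σ i) (τ i)), a x ≤ 0 := by
  obtain ⟨m, σ, τ, hm, hστ, -, hnonneg, hne, hnonpos⟩ := ha1
  exact ⟨m, σ, τ, hm, fun i =>
    ⟨(hστ i).2.1, Icc_subset_Icc (hστ i).1 (hστ i).2.2, hnonneg i, hne i⟩, hnonpos⟩

lemma CondA1.exists_eventually_hasAprioriBound (ha1 : CondA1 T a) (hT : 0 < T)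
    (ha : IntervalIntegrable a volume 0 T) :
    ∃ C, ∀ᶠ M in atTop, HasAprioriBound T a (Icc 0 T) C M := by
  obtain ⟨m, σ, τ, hm, hI, hnonpos⟩ := ha1.exists_isPositivityInterval
  choose C hC using fun i => (hI i).exists_eventually_hasAprioriBound hT.le ha
  obtain ⟨P, hP⟩ := Finite.bddAbove_range C
  refine ⟨P, (eventually_all.2 hC).mono fun M hM B h u u' R hh hh₀ hR hMh hu =>
    hu.le_of_forall_mem_le hT ha hh hh₀ (.iUnion fun i => measurableSet_Icc) hnonpos
      ((hI ⟨0, hm⟩).subset (left_mem_Icc.2 (hI ⟨0, hm⟩).le))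
      (mem_iUnion_of_mem ⟨0, hm⟩ (left_mem_Icc.2 (hI ⟨0, hm⟩).le)) fun x hx => ?_⟩
  obtain ⟨i, hi⟩ := mem_iUnion.1 hx
  exact (hM i).mono (hP (mem_range_self i)) hh hh₀ hR hMh hu x hi

section Necessity

variable {g g' : ℝ → ℝ}

lemma BoundaryCondition.IsPosSol.continuousOn_comp (hu : B.IsPosSol T a h u u')
    (hg : ContinuousOn g (Ioi 0)) : ContinuousOn (fun x => g (u x)) (Icc 0 T) :=
  hg.comp hu.isSolOn.continuousOn hu.pos

lemma BoundaryCondition.IsPosSol.neg_integral_weight_eq (hu : B.IsPosSol T a g u u') (hT : 0 ≤ T)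
    (ha : IntervalIntegrable a volume 0 T) (hg : ∀ s, 0 < s → HasDerivAt g (g' s) s)
    (hg' : ContinuousOn g' (Ioi 0)) (hg_pos : ∀ s, 0 < s → 0 < g s) :
    -∫ x in (0 : ℝ)..T, a x = ∫ x in (0 : ℝ)..T, g' (u x) / g (u x) ^ 2 * u' x ^ 2 := by
  have hg_cont : ContinuousOn g (Ioi 0) := fun s hs => (hg s hs).continuousAt.continuousWithinAt
  rw [← hu.isSolOn.integral_mul_comp hT
    (intervalIntegrable_mul_of_continuousOn_Icc hT ha (hu.continuousOn_comp hg_cont)) hu.holds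
    (ψ := fun s => -(g s)⁻¹) (ψ' := fun s => g' s / g s ^ 2)
    (fun x hx => ((hg _ (hu.pos x hx)).fun_inv (hg_pos _ (hu.pos x hx)).ne').fun_neg.congr_deriv
      (by ring))
    (hu.continuousOn_comp (hg'.div (hg_cont.pow 2) fun s hs => pow_ne_zero 2 (hg_pos s hs).ne')),
    ← intervalIntegral.integral_neg]
  refine intervalIntegral.integral_congr fun x hx => ?_
  have := (hg_pos _ (hu.pos x (uIcc_of_le hT ▸ hx))).ne'
  field_simp

lemma BoundaryCondition.IsPosSol.deriv_eqOn_zero (hu : B.IsPosSol T a g u u') (hT : 0 < T)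
    (ha : IntervalIntegrable a volume 0 T) (hg : ∀ s, 0 < s → HasDerivAt g (g' s) s)
    (hg' : ContinuousOn g' (Ioi 0)) (hg_pos : ∀ s, 0 < s → 0 < g s)
    (hg'_pos : ∀ s, 0 < s → 0 < g' s) (hA : 0 ≤ ∫ x in (0 : ℝ)..T, a x) :
    EqOn u' 0 (Icc 0 T) := by
  have hquot_pos (x) (hx : x ∈ Icc 0 T) : 0 < g' (u x) / g (u x) ^ 2 :=
    div_pos (hg'_pos _ (hu.pos x hx)) (pow_pos (hg_pos _ (hu.pos x hx)) 2)
  have hquot_cont : ContinuousOn (fun s => g' s / g s ^ 2) (Ioi 0) :=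
    hg'.div (fun s hs => ((hg s hs).continuousAt.pow 2).continuousWithinAt)
      fun s hs => pow_ne_zero 2 (hg_pos s hs).ne'
  have hquot_zero := eqOn_zero_of_integral_nonpos hT
    ((hu.continuousOn_comp hquot_cont).mul (hu.isSolOn.2.1.pow 2))
    (fun x hx => mul_nonneg (hquot_pos x hx).le (sq_nonneg _))
    ((hu.neg_integral_weight_eq hT.le ha hg hg' hg_pos).ge.trans (neg_nonpos.2 hA))
  intro x hx
  have hprod : g' (u x) / g (u x) ^ 2 * u' x ^ 2 = 0 := hquot_zero hx
  exact pow_eq_zero_iff two_ne_zero |>.1 ((mul_eq_zero.1 hprod).resolve_left (hquot_pos x hx).ne')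

lemma BoundaryCondition.IsPosSol.integral_weight_neg {σ τ : ℝ} (hu : B.IsPosSol T a g u u')
    (hT : 0 < T) (ha : IntervalIntegrable a volume 0 T) (hI : IsPositivityInterval T a σ τ)
    (hg : ∀ s, 0 < s → HasDerivAt g (g' s) s) (hg' : ContinuousOn g' (Ioi 0))
    (hg_pos : ∀ s, 0 < s → 0 < g s) (hg'_pos : ∀ s, 0 < s → 0 < g' s) :
    ∫ x in (0 : ℝ)..T, a x < 0 := by
  by_contra! hA
  have hu'_zero := hu.deriv_eqOn_zero hT ha hg hg' hg_pos hg'_pos hA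
  have h0 : (0 : ℝ) ∈ Icc 0 T := left_mem_Icc.2 hT.le
  have hu_const (x) (hx : x ∈ Icc 0 T) : u x = u 0 := by
    have hFTC := integral_eq_sub_of_hasDerivWithinAt_Icc hu.isSolOn.1 hu.isSolOn.2.1 h0 hx
    rw [intervalIntegral.integral_congr
      (hu'_zero.mono (ordConnected_Icc.uIcc_subset h0 hx))] at hFTC
    simpa [sub_eq_zero] using hFTC.symm
  have hu'_bump : ∫ x in (0 : ℝ)..T, u' x * bumpDeriv σ τ x = ∫ x in (0 : ℝ)..T, 0 :=
    intervalIntegral.integral_congr fun x hx => by simp [hu'_zero (uIcc_of_le hT.le ▸ hx)]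
  have hweak : ∫ x in (0 : ℝ)..T, a x * g (u x) * bump σ τ x = 0 := by
    rw [hu.isSolOn.integral_mul hT.le (intervalIntegrable_mul_of_continuousOn_Icc hT.le ha
      (hu.continuousOn_comp fun s hs => (hg s hs).continuousAt.continuousWithinAt))
      (fun x _ => (hasDerivAt_bump σ τ x).hasDerivWithinAt)
      (continuous_bumpDeriv σ τ).continuousOn, hu'_bump, hI.bump_zero, hI.bump_right]
    simp
  have hfactor : ∫ x in (0 : ℝ)..T, a x * g (u x) * bump σ τ x =
      g (u 0) * ∫ x in (0 : ℝ)..T, a x * bump σ τ x := by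
    rw [← intervalIntegral.integral_const_mul]
    refine intervalIntegral.integral_congr fun x hx => ?_
    simp only [hu_const x (uIcc_of_le hT.le ▸ hx)]
    ring
  exact (mul_pos (hg_pos _ (hu.pos 0 h0)) (hI.integral_mul_bump_pos ha)).ne' (hfactor ▸ hweak)

end Necessity

end AprioriBound

section SobolevSpace

open scoped RealInnerProductSpace

section KernelOperator

variable {X E : Type*} [TopologicalSpace X] [CompactSpace X] [NormedAddCommGroup E]

-- A function with modulus of continuity `‖k x - k y‖` is automatically continuous, so these
-- functions form a closed subset of the product `X → [-‖k‖, ‖k‖]`.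
lemma isCompact_setOf_abs_sub_le_norm_sub (k : C(X, E)) :
    IsCompact {u : C(X, ℝ) | (∀ x, |u x| ≤ ‖k‖) ∧ ∀ x y, |u x - u y| ≤ ‖k x - k y‖} := by
  have hk (x : X) : Tendsto (fun y => ‖k x - k y‖) (nhds x) (nhds 0) := by
    simpa using (continuous_const.sub k.continuous).norm.tendsto (f := fun y => ‖k x - k y‖) x
  have hcompact :
      IsCompact {f : X → ℝ | (∀ x, |f x| ≤ ‖k‖) ∧ ∀ x y, |f x - f y| ≤ ‖k x - k y‖} := by
    refine (isCompact_univ_pi fun _ => isCompact_Icc (a := -‖k‖) (b := ‖k‖)).of_isClosed_subset ?_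
      fun f hf x _ => abs_le.1 (hf.1 x)
    simp only [ofPred_and, ofPred_forall]
    exact (isClosed_iInter fun x => isClosed_le (by fun_prop) (by fun_prop)).inter
      (isClosed_iInter fun x => isClosed_iInter fun y => isClosed_le (by fun_prop) (by fun_prop))
  refine ArzelaAscoli.isCompact_of_equicontinuous _ ?_ fun x =>
    Metric.equicontinuousAt_of_continuity_modulus _ (hk x) _
      (Eventually.of_forall fun y u => u.2.2 x y)
  convert hcompact
  refine Subset.antisymm (by rintro _ ⟨u, hu, rfl⟩; exact hu) fun f hf => ?_
  have hcont : Continuous f := continuous_iff_continuousAt.2 fun x =>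
    tendsto_iff_norm_sub_tendsto_zero.2 (squeeze_zero (fun _ => norm_nonneg _)
      (fun y => (abs_sub_comm _ _).trans_le (hf.2 x y)) (hk x))
  exact ⟨⟨f, hcont⟩, hf, rfl⟩

variable [InnerProductSpace ℝ E]

/-- The operator sending `z` to the continuous function `x ↦ ⟪k x, z⟫`. -/
noncomputable def kernelOperator (k : C(X, E)) : E →L[ℝ] C(X, ℝ) :=
  LinearMap.mkContinuous
    { toFun z := ⟨fun x => ⟪k x, z⟫, by fun_prop⟩
      map_add' z w := by ext x; simp [inner_add_right]
      map_smul' c z := by ext x; simp [inner_smul_right] } ‖k‖ fun z =>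
    (ContinuousMap.norm_le _ (by positivity)).2 fun x =>
      (norm_inner_le_norm _ _).trans (by gcongr; exact k.norm_coe_le_norm x)

lemma kernelOperator_apply (k : C(X, E)) (z : E) (x : X) : kernelOperator k z x = ⟪k x, z⟫ := rfl

lemma isCompactOperator_kernelOperator (k : C(X, E)) : IsCompactOperator (kernelOperator k) := by
  refine ⟨_, isCompact_setOf_abs_sub_le_norm_sub k,
    mem_of_superset (Metric.closedBall_mem_nhds 0 one_pos) fun z hz => ?_⟩
  have hz : ‖z‖ ≤ 1 := mem_closedBall_zero_iff.1 hz
  have hle (v : E) : |⟪v, z⟫| ≤ ‖v‖ :=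
    (abs_real_inner_le_norm v z).trans (mul_le_of_le_one_right (norm_nonneg v) hz)
  refine ⟨fun x => (hle _).trans (k.norm_coe_le_norm x), fun x y => ?_⟩
  rw [kernelOperator_apply, kernelOperator_apply, ← inner_sub_left]
  exact hle _

end KernelOperator

/-- The Sobolev space `H¹(0,T)`: the pair `(c, p)` encodes the function `x ↦ c + ∫₀ˣ p`. -/
abbrev H1 (T : ℝ) := WithLp 2 (ℝ × Lp ℝ 2 (volume.restrict (Ioc 0 T)))

namespace H1

variable {T : ℝ}

/-- The element of `H¹(0,T)` representing the evaluation at `x`. -/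
noncomputable def evalVector (T x : ℝ) : H1 T :=
  WithLp.toLp 2 (1, indicatorConstLp 2 measurableSet_Iic (measure_ne_top _ (Iic x)) 1)

lemma continuous_evalVector (T : ℝ) : Continuous (evalVector T) := by
  refine (WithLp.prod_continuous_toLp 2 _ _).comp (continuous_const.prodMk
    (continuous_indicatorConstLp_set ENNReal.ofNat_ne_top fun x => ?_))
  have hle (y : ℝ) : volume.restrict (Ioc 0 T) (symmDiff (Iic y) (Iic x))
      ≤ ENNReal.ofReal |y - x| := by
    refine (Measure.restrict_apply_le _ _).trans ?_
    have : symmDiff (Iic y) (Iic x) ⊆ uIoc x y := by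
      rintro t (⟨h₁, h₂⟩ | ⟨h₁, h₂⟩) <;> simp_all [mem_uIoc]
    exact (measure_mono this).trans (by rw [Real.volume_uIoc])
  refine tendsto_of_tendsto_of_tendsto_of_le_of_le tendsto_const_nhds ?_ (fun _ => zero_le) hle
  have : Tendsto (fun y => ENNReal.ofReal |y - x|) (nhds x) (nhds (ENNReal.ofReal |x - x|)) :=
    (ENNReal.continuous_ofReal.comp (by fun_prop)).tendsto x
  simpa using this

lemma inner_evalVector {x : ℝ} (hx : x ∈ Icc 0 T) (z : H1 T) :
    ⟪evalVector T x, z⟫ = z.fst + ∫ t in (0 : ℝ)..x, z.snd t := by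
  rw [WithLp.prod_inner_apply, intervalIntegral.integral_of_le hx.1]
  change ⟪(1 : ℝ), z.fst⟫ + ⟪indicatorConstLp 2 measurableSet_Iic
    (measure_ne_top _ (Iic x)) (1 : ℝ), z.snd⟫ = _
  rw [L2.inner_indicatorConstLp_one, Measure.restrict_restrict measurableSet_Iic, inter_comm,
    Ioc_inter_Iic, min_eq_right hx.2]
  simp

/-- The embedding of `H¹(0,T)` into the continuous functions on `[0,T]`. -/
noncomputable def toContinuousMap (T : ℝ) : H1 T →L[ℝ] C(Icc 0 T, ℝ) :=
  kernelOperator ⟨fun x => evalVector T x, (continuous_evalVector T).comp continuous_subtype_val⟩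

lemma toContinuousMap_apply (z : H1 T) (x : Icc 0 T) :
    toContinuousMap T z x = z.fst + ∫ t in (0 : ℝ)..x, z.snd t :=
  inner_evalVector x.2 z

lemma isCompactOperator_toContinuousMap (T : ℝ) : IsCompactOperator (toContinuousMap T) :=
  isCompactOperator_kernelOperator _

lemma norm_snd_evalVector_le (hT : 0 ≤ T) (x : ℝ) : ‖(evalVector T x).snd‖ ≤ √T := by
  have hmeas : (volume.restrict (Ioc 0 T)).real (Iic x) ≤ T := by
    refine (measureReal_mono (subset_univ _)).trans_eq ?_
    simp [hT]
  calc ‖(evalVector T x).snd‖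
      ≤ ‖(1 : ℝ)‖ * (volume.restrict (Ioc 0 T)).real (Iic x) ^ (1 / ENNReal.toReal 2) :=
        norm_indicatorConstLp_le (hs := measurableSet_Iic) (hμs := measure_ne_top _ (Iic x))
    _ ≤ √T := by
        rw [norm_one, one_mul, ENNReal.toReal_ofNat, ← Real.sqrt_eq_rpow]
        exact Real.sqrt_le_sqrt hmeas

lemma abs_toContinuousMap_sub_fst_le (z : H1 T) (x : Icc 0 T) :
    |toContinuousMap T z x - z.fst| ≤ √T * ‖z.snd‖ := by
  have hsplit : toContinuousMap T z x = z.fst + ⟪(evalVector T x).snd, z.snd⟫ :=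
    (WithLp.prod_inner_apply (evalVector T x) z).trans (by simp [evalVector])
  rw [hsplit, add_sub_cancel_left]
  refine (abs_real_inner_le_norm _ _).trans ?_
  gcongr
  exact norm_snd_evalVector_le (x.2.1.trans x.2.2) x

/-- A bound for the supremum of the function encoded by `z`; it is a norm equivalent to that of
`H¹(0,T)`. -/
noncomputable def supBound (z : H1 T) : ℝ := |z.fst| + √T * ‖z.snd‖

lemma continuous_supBound (T : ℝ) : Continuous (supBound (T := T)) := by
  unfold supBound
  have hfst : Continuous fun z : H1 T => z.fst := (WithLp.prod_continuous_ofLp 2 _ _).fst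
  have hsnd : Continuous fun z : H1 T => z.snd := (WithLp.prod_continuous_ofLp 2 _ _).snd
  exact hfst.abs.add (continuous_const.mul hsnd.norm)

lemma norm_sq_eq (z : H1 T) : ‖z‖ ^ 2 = z.fst ^ 2 + ‖z.snd‖ ^ 2 := by
  rw [WithLp.prod_norm_sq_eq_of_L2, Real.norm_eq_abs, sq_abs]

lemma intervalIntegrable_snd (hT : 0 ≤ T) (z : H1 T) : IntervalIntegrable z.snd volume 0 T :=
  (intervalIntegrable_iff_integrableOn_Ioc_of_le hT).2 ((Lp.memLp z.snd).integrable one_le_two)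

end H1

end SobolevSpace

section Regularity

open scoped RealInnerProductSpace

open H1 intervalIntegral

variable {T : ℝ}

lemma memLp_two_of_continuousOn {v : ℝ → ℝ} (hv : ContinuousOn v (Icc 0 T)) :
    MemLp v 2 (volume.restrict (Ioc 0 T)) := by
  obtain ⟨C, hC⟩ := isCompact_Icc.exists_bound_of_continuousOn hv
  exact MemLp.of_bound ((hv.mono Ioc_subset_Icc_self).aestronglyMeasurable measurableSet_Ioc) C
    (ae_restrict_of_forall_mem measurableSet_Ioc fun x hx => hC x (Ioc_subset_Icc_self hx))

lemma continuousOn_integral_right (hT : 0 ≤ T) {f : ℝ → ℝ} (hf : IntervalIntegrable f volume 0 T) :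
    ContinuousOn (fun x => ∫ t in x..T, f t) (Icc 0 T) := by
  rw [← uIcc_of_le hT]
  have hprim := (continuousOn_primitive_interval' hf.symm left_mem_uIcc).neg
  rw [uIcc_comm] at hprim
  exact hprim.congr fun x _ => integral_symm T x

lemma isSolOn_of_eqOn_integral (hT : 0 ≤ T) {f u v : ℝ → ℝ} {c : ℝ}
    (hv : ContinuousOn v (Icc 0 T)) (hu : EqOn u (fun x => c + ∫ t in (0 : ℝ)..x, v t) (Icc 0 T))
    (hvf : ∀ x ∈ Icc 0 T, v x = v 0 - ∫ t in (0 : ℝ)..x, f t) : IsSolOn T f u v := by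
  refine ⟨fun x hx => ?_, hv, hvf⟩
  have : Fact (x ∈ Icc 0 T) := ⟨hx⟩
  have hint : IntervalIntegrable v volume 0 x :=
    (intervalIntegrable_of_continuousOn_Icc hT hv).mono_set
      (uIcc_subset_uIcc_left (uIcc_of_le hT ▸ hx))
  exact ((integral_hasDerivWithinAt_right hint ⟨Icc 0 T, self_mem_nhdsWithin,
    hv.aestronglyMeasurable measurableSet_Icc⟩ (hv x hx)).const_add c).congr hu (hu hx)

namespace H1

/-- The vector of `H¹(0,T)` representing the functional `w ↦ ∫₀ᵀ f w`. -/
noncomputable def integralVector (hT : 0 ≤ T) {f : ℝ → ℝ} (hf : IntervalIntegrable f volume 0 T) :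
    H1 T :=
  WithLp.toLp 2 (∫ t in (0 : ℝ)..T, f t,
    (memLp_two_of_continuousOn (continuousOn_integral_right hT hf)).toLp _)

lemma inner_integralVector (hT : 0 ≤ T) {f : ℝ → ℝ} (hf : IntervalIntegrable f volume 0 T)
    (w : H1 T) : ⟪integralVector hT hf, w⟫ =
      ∫ x in (0 : ℝ)..T, f x * IccExtend hT (toContinuousMap T w) x := by
  have hw := intervalIntegrable_snd hT w
  have hprim : ContinuousOn (fun x => ∫ t in (0 : ℝ)..x, w.snd t) (uIcc 0 T) :=
    continuousOn_primitive_interval' hw left_mem_uIcc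
  have hprim_f : ContinuousOn (fun x => ∫ t in (0 : ℝ)..x, f t) (uIcc 0 T) :=
    continuousOn_primitive_interval' hf left_mem_uIcc
  have hsnd : ⟪(integralVector hT hf).snd, w.snd⟫ =
      ∫ x in (0 : ℝ)..T, w.snd x * ∫ t in x..T, f t := by
    rw [L2.inner_def, integral_of_le hT]
    refine integral_congr_ae ?_
    filter_upwards [MemLp.coeFn_toLp (memLp_two_of_continuousOn
      (continuousOn_integral_right hT hf))] with x hx
    exact congrArg (w.snd x * ·) hx
  have hsplit : ∀ x ∈ uIcc 0 T, w.snd x * ∫ t in x..T, f t =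
      w.snd x * (∫ t in (0 : ℝ)..T, f t) - w.snd x * ∫ t in (0 : ℝ)..x, f t := fun x hx => by
    rw [← mul_sub, integral_interval_sub_left hf (hf.mono_set (uIcc_subset_uIcc_left hx))]
  have heval : ∀ x ∈ uIcc 0 T, f x * IccExtend hT (toContinuousMap T w) x =
      f x * w.fst + f x * ∫ t in (0 : ℝ)..x, w.snd t := fun x hx => by
    rw [IccExtend_of_mem hT _ (uIcc_of_le hT ▸ hx), toContinuousMap_apply, mul_add]
  calc ⟪integralVector hT hf, w⟫ = w.fst * (∫ t in (0 : ℝ)..T, f t) +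
        ∫ x in (0 : ℝ)..T, w.snd x * ∫ t in x..T, f t := by rw [← hsnd]; rfl
    _ = (∫ t in (0 : ℝ)..T, f t) * w.fst + ∫ x in (0 : ℝ)..T, f x * ∫ t in (0 : ℝ)..x, w.snd t := by
        rw [integral_congr hsplit, integral_sub (hw.mul_const _) (hw.mul_continuousOn hprim_f),
          intervalIntegral.integral_mul_const, integral_mul_integral_right_eq hf hw]
        ring
    _ = _ := by
        rw [integral_congr heval, integral_add (hf.mul_const _) (hf.mul_continuousOn hprim),
          intervalIntegral.integral_mul_const]

end H1

namespace BoundaryCondition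

/-- The subspace of `H¹(0,T)` on which the variational problem is posed. The conditions on `u'` are
natural, so that only the condition `u 0 = u T` has to be imposed in the periodic case. -/
noncomputable def space (T : ℝ) : BoundaryCondition → Submodule ℝ (H1 T)
  | neumann => ⊤
  | periodic => (ℝ ∙ (evalVector T T - evalVector T 0))ᗮ

instance completeSpace_space (B : BoundaryCondition) : CompleteSpace (B.space T) :=
  have hclosed : IsClosed (B.space T : Set (H1 T)) :=
    match B with
    | neumann => isClosed_univ
    | periodic => Submodule.isClosed_orthogonal _
  hclosed.completeSpace_coe

lemma snd_evalVector_sub_ae_eq_one (T : ℝ) :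
    (evalVector T T - evalVector T 0).snd =ᵐ[volume.restrict (Ioc 0 T)] 1 := by
  have hind (x : ℝ) : (evalVector T x).snd =ᵐ[volume.restrict (Ioc 0 T)] (Iic x).indicator 1 :=
    indicatorConstLp_coeFn (hs := measurableSet_Iic) (hμs := measure_ne_top _ _) (c := 1)
  filter_upwards [Lp.coeFn_sub (evalVector T T).snd (evalVector T 0).snd, hind T, hind 0,
    ae_restrict_mem measurableSet_Ioc] with x hsub hT h0 hx
  rw [WithLp.sub_snd, hsub, Pi.sub_apply, hT, h0, indicator_of_mem (mem_Iic.2 hx.2),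
    indicator_of_notMem (notMem_Iic.2 hx.1), sub_zero]

lemma ae_eq_const_of_mem_orthogonal_space {B : BoundaryCondition} {z : H1 T}
    (hz : z ∈ (B.space T)ᗮ) : z.fst = 0 ∧ ∃ c : ℝ, (B = neumann → c = 0) ∧
      z.snd =ᵐ[volume.restrict (Ioc 0 T)] fun _ => c := by
  cases B with
  | neumann =>
    obtain rfl : z = 0 := by simpa [space] using hz
    exact ⟨rfl, 0, fun _ => rfl, Lp.coeFn_zero _ _ _⟩
  | periodic =>
    rw [space, Submodule.orthogonal_orthogonal] at hz
    obtain ⟨c, rfl⟩ := Submodule.mem_span_singleton.1 hz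
    refine ⟨by simp [evalVector], c, nofun, ?_⟩
    filter_upwards [Lp.coeFn_smul c (evalVector T T - evalVector T 0).snd,
      snd_evalVector_sub_ae_eq_one T] with x hsmul hone
    rw [WithLp.smul_snd, hsmul, Pi.smul_apply, hone, Pi.one_apply, smul_eq_mul, mul_one]

lemma holds_of_mem_space (hT : 0 ≤ T) {B : BoundaryCondition} {z : H1 T} (hz : z ∈ B.space T)
    {u' : ℝ → ℝ} (hu' : u' 0 = u' T) (hB : B = neumann → u' 0 = 0) :
    B.Holds T (IccExtend hT (toContinuousMap T z)) u' := by
  cases B with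
  | neumann => exact ⟨hB rfl, hu' ▸ hB rfl⟩
  | periodic =>
    have h := Submodule.mem_orthogonal_singleton_iff_inner_right.1 hz
    rw [inner_sub_left, sub_eq_zero, inner_evalVector (right_mem_Icc.2 hT),
      inner_evalVector (left_mem_Icc.2 hT)] at h
    refine ⟨?_, hu'⟩
    rw [IccExtend_left, IccExtend_right, toContinuousMap_apply, toContinuousMap_apply]
    exact h.symm

lemma exists_ae_eq_add_integral_of_forall_inner_eq (hT : 0 ≤ T) {f : ℝ → ℝ}
    (hf : IntervalIntegrable f volume 0 T) {B : BoundaryCondition} {z : H1 T}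
    (hcrit : ∀ w ∈ B.space T, ⟪z.snd, w.snd⟫ =
      ∫ x in (0 : ℝ)..T, f x * IccExtend hT (toContinuousMap T w) x) :
    ∫ t in (0 : ℝ)..T, f t = 0 ∧ ∃ c : ℝ, (B = neumann → c = 0) ∧
      z.snd =ᵐ[volume.restrict (Ioc 0 T)] fun x => c + ∫ t in x..T, f t := by
  obtain ⟨hfst, c, hc, hsnd⟩ := ae_eq_const_of_mem_orthogonal_space (B := B)
    (z := WithLp.toLp 2 (0, z.snd) - integralVector hT hf)
    ((Submodule.mem_orthogonal' _ _).2 fun w hw => by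
      rw [inner_sub_left, inner_integralVector, ← hcrit w hw, WithLp.prod_inner_apply]; simp)
  refine ⟨by simpa [integralVector] using hfst, c, hc, ?_⟩
  filter_upwards [hsnd, Lp.coeFn_sub z.snd (integralVector hT hf).snd,
    MemLp.coeFn_toLp (memLp_two_of_continuousOn (continuousOn_integral_right hT hf))]
    with x hx hsub hN
  change (z.snd - (integralVector hT hf).snd : Lp ℝ 2 _) x = c at hx
  change (integralVector hT hf).snd x = _ at hN
  rw [hsub, Pi.sub_apply] at hx
  rw [← hx, ← hN, sub_add_cancel]

theorem exists_isSolOn_of_forall_inner_eq (hT : 0 ≤ T) {f : ℝ → ℝ}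
    (hf : IntervalIntegrable f volume 0 T) {B : BoundaryCondition} {z : H1 T} (hz : z ∈ B.space T)
    (hcrit : ∀ w ∈ B.space T, ⟪z.snd, w.snd⟫ =
      ∫ x in (0 : ℝ)..T, f x * IccExtend hT (toContinuousMap T w) x) :
    ∃ u', IsSolOn T f (IccExtend hT (toContinuousMap T z)) u' ∧
      B.Holds T (IccExtend hT (toContinuousMap T z)) u' := by
  obtain ⟨hint, c, hc, hsnd⟩ := exists_ae_eq_add_integral_of_forall_inner_eq hT hf hcrit
  refine ⟨fun x => c + ∫ t in x..T, f t, isSolOn_of_eqOn_integral hT (c := z.fst)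
    (continuousOn_const.add (continuousOn_integral_right hT hf)) (fun x hx => ?_) fun x hx => ?_,
    holds_of_mem_space hT hz (by simp [hint]) fun hB => by simp [hint, hc hB]⟩
  · rw [IccExtend_of_mem hT _ hx, toContinuousMap_apply]
    refine congrArg (z.fst + ·) (integral_congr_ae_restrict ?_)
    rw [uIoc_of_le hx.1]
    exact ae_restrict_of_ae_restrict_of_subset (Ioc_subset_Ioc_right hx.2) hsnd
  · have hx' : x ∈ uIcc 0 T := uIcc_of_le hT ▸ hx
    rw [← integral_interval_sub_left hf (hf.mono_set (uIcc_subset_uIcc_left hx'))]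
    ring

end BoundaryCondition

end Regularity

section VariationalProblem

open scoped RealInnerProductSpace NNReal

variable {T : ℝ} {a : ℝ → ℝ}

lemma IsSolOn.congr_rhs {f f' u u' : ℝ → ℝ} (hu : IsSolOn T f u u')
    (hf : EqOn f f' (Icc 0 T)) : IsSolOn T f' u u' :=
  ⟨hu.1, hu.2.1, fun x hx => by
    rw [hu.2.2 x hx, intervalIntegral.integral_congr (hf.mono (uIcc_of_le hx.1 ▸
      Icc_subset_Icc_right hx.2))]⟩

/-- The functional `v ↦ ∫₀ᵀ a v` on the continuous functions on `[0,T]`. -/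
noncomputable def weightedIntegral (hT : 0 ≤ T) (ha : IntervalIntegrable a volume 0 T) :
    StrongDual ℝ C(Icc 0 T, ℝ) :=
  have hint (v : C(Icc 0 T, ℝ)) : IntervalIntegrable (fun x => a x * IccExtend hT v x) volume 0 T :=
    ha.mul_continuousOn (v.IccExtend hT).continuous.continuousOn
  LinearMap.mkContinuous
    { toFun v := ∫ x in (0 : ℝ)..T, a x * IccExtend hT v x
      map_add' v w := by
        rw [← intervalIntegral.integral_add (hint v) (hint w)]
        simp only [← mul_add]; rfl
      map_smul' c v := by
        rw [RingHom.id_apply, smul_eq_mul, ← intervalIntegral.integral_const_mul]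
        simp only [mul_left_comm c]; rfl } (∫ x in (0 : ℝ)..T, |a x|) fun v => by
    rw [← intervalIntegral.integral_mul_const]
    refine intervalIntegral.norm_integral_le_of_norm_le hT (ae_of_all _ fun x _ => ?_)
      (ha.abs.mul_const _)
    rw [norm_mul, Real.norm_eq_abs]
    gcongr
    exact v.norm_coe_le_norm _

lemma weightedIntegral_apply (hT : 0 ≤ T) (ha : IntervalIntegrable a volume 0 T)
    (v : C(Icc 0 T, ℝ)) :
    weightedIntegral hT ha v = ∫ x in (0 : ℝ)..T, a x * IccExtend hT v x := rfl

/-- The functional `u ↦ u(0)²/2 + ∫₀ᵀ a H(u) - ∫₀ᵀ (u⁻)²/2`. On `H¹(0,T)`, subtracting it from half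
the squared norm leaves the energy `‖u'‖²/2 - ∫₀ᵀ a H(u) + ∫₀ᵀ (u⁻)²/2`. -/
noncomputable def potential (hT : 0 ≤ T) (ha : IntervalIntegrable a volume 0 T) (H : C(ℝ, ℝ))
    (u : C(Icc 0 T, ℝ)) : ℝ :=
  u ⟨0, left_mem_Icc.2 hT⟩ ^ 2 / 2 + weightedIntegral hT ha (H.comp u)
    + weightedIntegral hT (intervalIntegrable_const (c := 1)) (negPartPrimitive.comp u)

/-- The differential of `potential` for a primitive of `h`. -/
noncomputable def potentialForm (hT : 0 ≤ T) (ha : IntervalIntegrable a volume 0 T) (h : C(ℝ, ℝ))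
    (u : C(Icc 0 T, ℝ)) : StrongDual ℝ C(Icc 0 T, ℝ) :=
  nemytskiiForm (ContinuousMap.evalCLM ℝ ⟨0, left_mem_Icc.2 hT⟩) (ContinuousMap.id ℝ) u
    + nemytskiiForm (weightedIntegral hT ha) h u
    + nemytskiiForm (weightedIntegral hT (intervalIntegrable_const (c := 1))) negPartMap u

lemma potentialForm_apply (hT : 0 ≤ T) (ha : IntervalIntegrable a volume 0 T) (h : C(ℝ, ℝ))
    (u v : C(Icc 0 T, ℝ)) :
    potentialForm hT ha h u v = u ⟨0, left_mem_Icc.2 hT⟩ * v ⟨0, left_mem_Icc.2 hT⟩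
      + ∫ x in (0 : ℝ)..T, (a x * h (IccExtend hT u x) + negPartMap (IccExtend hT u x))
          * IccExtend hT v x := by
  have hah : IntervalIntegrable (fun x => a x * (h.comp u * v).IccExtend hT x) volume 0 T :=
    ha.mul_continuousOn (ContinuousMap.continuous _).continuousOn
  have hneg : IntervalIntegrable (fun x => 1 * (negPartMap.comp u * v).IccExtend hT x)
      volume 0 T :=
    intervalIntegrable_const.mul_continuousOn (ContinuousMap.continuous _).continuousOn
  simp only [potentialForm, add_apply, nemytskiiForm_apply,
    weightedIntegral_apply, add_assoc]
  refine congrArg₂ (· + ·) rfl ?_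
  refine (intervalIntegral.integral_add hah hneg).symm.trans
    (intervalIntegral.integral_congr fun x _ => ?_)
  simp [IccExtend]
  ring

lemma continuous_potential (hT : 0 ≤ T) (ha : IntervalIntegrable a volume 0 T) (H : C(ℝ, ℝ)) :
    Continuous (potential hT ha H) := by
  unfold potential
  have (H : C(ℝ, ℝ)) : Continuous fun u : C(Icc 0 T, ℝ) => H.comp u :=
    ContinuousMap.continuous_postcomp H
  fun_prop

lemma continuous_potentialForm (hT : 0 ≤ T) (ha : IntervalIntegrable a volume 0 T) (h : C(ℝ, ℝ)) :
    Continuous (potentialForm hT ha h) :=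
  ((continuous_nemytskiiForm _ _).add (continuous_nemytskiiForm _ _)).add
    (continuous_nemytskiiForm _ _)

lemma exists_potential_add_ge (hT : 0 ≤ T) (ha : IntervalIntegrable a volume 0 T) {h H : C(ℝ, ℝ)}
    {K : ℝ≥0} (hh : LipschitzWith K h) (hH : ∀ s, HasDerivAt H (h s) s) :
    ∃ C, 0 ≤ C ∧ ∀ u v, potential hT ha H u + potentialForm hT ha h u v - C * ‖v‖ ^ 2
      ≤ potential hT ha H (u + v) := by
  set δ : StrongDual ℝ C(Icc 0 T, ℝ) := ContinuousMap.evalCLM ℝ ⟨0, left_mem_Icc.2 hT⟩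
  set ℓ := weightedIntegral hT ha
  set ℓ₁ := weightedIntegral hT (intervalIntegrable_const (c := (1 : ℝ)))
  refine ⟨1 / 2 * ‖δ‖ ^ 2 + ‖ℓ‖ * K + ‖ℓ₁‖ * (1 : ℝ≥0), by positivity, fun u v => ?_⟩
  have hsq : δ (u + v) ^ 2 / 2 = δ u ^ 2 / 2 + δ u * δ v + δ v ^ 2 / 2 := by
    rw [map_add]; ring
  have ha_taylor := abs_le.1 (abs_nemytskii_taylor_le ℓ hh hH u v)
  have h1_taylor := abs_le.1 (abs_nemytskii_taylor_le ℓ₁ lipschitzWith_negPartMap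
    hasDerivAt_negPartPrimitive u v)
  have hpot (u) : potential hT ha H u = δ u ^ 2 / 2 + ℓ (H.comp u) + ℓ₁ (negPartPrimitive.comp u) :=
    rfl
  have hform : potentialForm hT ha h u v =
      δ u * δ v + nemytskiiForm ℓ h u v + nemytskiiForm ℓ₁ negPartMap u v := rfl
  rw [hpot, hpot, hform, hsq]
  nlinarith [sq_nonneg (δ v), mul_nonneg (sq_nonneg ‖δ‖) (sq_nonneg ‖v‖)]

lemma potentialForm_smul (hT : 0 ≤ T) (ha : IntervalIntegrable a volume 0 T) {h : C(ℝ, ℝ)} {s : ℝ}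
    (hs : 0 ≤ s) (hh : ∀ r, h (s * r) = s * h r) (u : C(Icc 0 T, ℝ)) :
    potentialForm hT ha h (s • u) = s • potentialForm hT ha h u := by
  have hneg (r : ℝ) : negPartMap (s * r) = s * negPartMap r := by
    change max (-(s * r)) 0 = s * max (-r) 0
    rw [mul_max_of_nonneg _ _ hs, mul_neg, mul_zero]
  simp only [potentialForm, nemytskiiForm_smul _ hh, nemytskiiForm_smul _ hneg,
    nemytskiiForm_smul _ (h := ContinuousMap.id ℝ) (s := s) (fun _ => rfl), smul_add]

lemma norm_potentialForm_sub_le (hT : 0 ≤ T) (ha : IntervalIntegrable a volume 0 T)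
    {h h' : C(ℝ, ℝ)} {B : ℝ} (hB : ∀ r, |h r - h' r| ≤ B) (u : C(Icc 0 T, ℝ)) :
    ‖potentialForm hT ha h u - potentialForm hT ha h' u‖ ≤ ‖weightedIntegral hT ha‖ * B := by
  rw [potentialForm, potentialForm, add_sub_add_right_eq_sub, add_sub_add_left_eq_sub]
  exact norm_nemytskiiForm_sub_le _ hB u

lemma HasAprioriBound.not_isPosSol_of_forall_mul_le {C M : ℝ}
    (hC : HasAprioriBound T a (Icc 0 T) C M) (hT : 0 ≤ T) {h : ℝ → ℝ} (hh : Continuous h)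
    (hh_nonneg : ∀ s, 0 ≤ s → 0 ≤ h s) (hhM : ∀ s, M * s ≤ h s) {B : BoundaryCondition}
    {u u' : ℝ → ℝ} : ¬ B.IsPosSol T a h u u' := fun hu => by
  have h0 : (0 : ℝ) ∈ Icc 0 T := left_mem_Icc.2 hT
  have hle (R : ℝ) (hR : 0 < R) : u 0 ≤ C * R := hC hh hh_nonneg hR (fun s _ => hhM s) hu 0 h0
  have hlim : Tendsto (fun R => C * R) (nhdsWithin 0 (Ioi 0)) (nhds (C * 0)) :=
    tendsto_nhdsWithin_of_tendsto_nhds (Continuous.tendsto (by fun_prop) 0)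
  have hu0 : u 0 ≤ C * 0 := ge_of_tendsto hlim (eventually_mem_nhdsWithin.mono fun R hR => hle R hR)
  exact (hu.pos 0 h0).not_ge (hu0.trans_eq (mul_zero C))

namespace BoundaryCondition

variable (B : BoundaryCondition)

/-- The embedding of `B.space T` into the continuous functions on `[0,T]`. -/
noncomputable def embedding (T : ℝ) : B.space T →L[ℝ] C(Icc 0 T, ℝ) :=
  (H1.toContinuousMap T).comp (B.space T).subtypeL

lemma isCompactOperator_embedding (T : ℝ) : IsCompactOperator (B.embedding T) :=
  (H1.isCompactOperator_toContinuousMap T).comp_clm _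

variable {B}

lemma embedding_apply_zero (hT : 0 ≤ T) (z : B.space T) :
    B.embedding T z ⟨0, left_mem_Icc.2 hT⟩ = (z : H1 T).fst := by
  simp [embedding, H1.toContinuousMap_apply]

lemma snd_inner_eq_of_inner_eq_potentialForm (hT : 0 ≤ T) (ha : IntervalIntegrable a volume 0 T)
    {h : C(ℝ, ℝ)} {z w : B.space T}
    (hzw : ⟪z, w⟫ = potentialForm hT ha h (B.embedding T z) (B.embedding T w)) :
    ⟪(z : H1 T).snd, (w : H1 T).snd⟫ = ∫ x in (0 : ℝ)..T,
      (a x * h (IccExtend hT (B.embedding T z) x) + negPartMap (IccExtend hT (B.embedding T z) x))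
        * IccExtend hT (B.embedding T w) x := by
  rw [potentialForm_apply, embedding_apply_zero hT, embedding_apply_zero hT, Submodule.coe_inner,
    WithLp.prod_inner_apply] at hzw
  exact add_left_cancel (hzw.trans (congrArg (· + _) (mul_comm _ _)))

lemma eq_zero_or_exists_isPosSol (hT : 0 < T) (ha : IntervalIntegrable a volume 0 T)
    {h : C(ℝ, ℝ)} {K : ℝ} (hh₀ : EqOn h 0 (Iic 0)) (hhK : ∀ s, 0 ≤ s → |h s| ≤ K * s)
    {z : B.space T} (hz : ∀ w, ⟪z, w⟫ =
      potentialForm hT.le ha h (B.embedding T z) (B.embedding T w)) :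
    z = 0 ∨ ∃ u', B.IsPosSol T a h (IccExtend hT.le (B.embedding T z)) u' := by
  set u := IccExtend hT.le (B.embedding T z)
  have hu_cont : Continuous u := ((B.embedding T z).IccExtend hT.le).continuous
  have hf : IntervalIntegrable (fun x => a x * h (u x) + negPartMap (u x)) volume 0 T :=
    (ha.mul_continuousOn (h.continuous.comp hu_cont).continuousOn).add
      (Continuous.intervalIntegrable (by fun_prop) 0 T)
  obtain ⟨u', hu, hB⟩ : ∃ u', IsSolOn T (fun x => a x * h (u x) + negPartMap (u x)) u u' ∧
      B.Holds T u u' := exists_isSolOn_of_forall_inner_eq hT.le hf z.2 fun w hw =>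
    snd_inner_eq_of_inner_eq_potentialForm hT.le ha (hz ⟨w, hw⟩)
  have hnonneg : ∀ x ∈ Icc 0 T, 0 ≤ u x := hu.nonneg_of_eqOn_zero hT ha h.continuous hh₀ hB
  have hu' : IsSolOn T (fun x => a x * h (u x)) u u' := hu.congr_rhs fun x hx => by
    simp [negPartMap, hnonneg x hx]
  by_cases hux : ∃ x ∈ Icc 0 T, u x ≠ 0
  · obtain ⟨x, hx, hux⟩ := hux
    exact .inr ⟨u', hu', hu'.pos_of_nonneg ha h.continuous hhK hB hnonneg hx hux, hB⟩
  · push Not at hux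
    have hzero : B.embedding T z = 0 := by
      ext x
      simpa [u] using hux x x.2
    refine .inl (inner_self_eq_zero (𝕜 := ℝ).1 ?_)
    rw [hz, hzero, map_zero]

/-- The energy functional of the truncated problem, whose critical points are its solutions. -/
noncomputable def energy (hT : 0 ≤ T) (ha : IntervalIntegrable a volume 0 T) (H : C(ℝ, ℝ))
    (z : B.space T) : ℝ :=
  ‖z‖ ^ 2 / 2 - potential hT ha H (B.embedding T z)

theorem exists_isPosSol_of_barrier (hT : 0 < T) (ha : IntervalIntegrable a volume 0 T)
    {h H : C(ℝ, ℝ)} {K : ℝ≥0} (hh : LipschitzWith K h) (hH : ∀ s, HasDerivAt H (h s) s)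
    (hh₀ : EqOn h 0 (Iic 0)) {M C₀ : ℝ} (hM : 0 ≤ M) (hhM : ∀ s, |h s - M * max s 0| ≤ C₀) {C : ℝ}
    (hC : HasAprioriBound T a (Icc 0 T) C M) {r : B.space T → ℝ} {α ρ : ℝ} (hr : Continuous r)
    (hbarrier : ∀ z, r z = ρ → α ≤ B.energy hT.le ha H z) (hJ₀ : B.energy hT.le ha H 0 < α)
    (hr₀ : r 0 < ρ) {z₁ : B.space T} (hJ₁ : B.energy hT.le ha H z₁ < α) (hr₁ : ρ < r z₁) :
    ∃ u u', B.IsPosSol T a h u u' := by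
  let hLin : C(ℝ, ℝ) := ⟨fun s => M * max s 0, by fun_prop⟩
  obtain ⟨C₁, hC₁, htaylor⟩ := exists_potential_add_ge hT.le ha hh hH
  have hker (z : B.space T) (hz : ∀ w, ⟪z, w⟫ =
      potentialForm hT.le ha hLin (B.embedding T z) (B.embedding T w)) : z = 0 := by
    refine (eq_zero_or_exists_isPosSol hT ha (K := M) (fun s hs => ?_) (fun s hs => ?_)
      hz).resolve_right ?_
    · simp [hLin, max_eq_right hs.out]
    · simp [hLin, max_eq_left hs, abs_of_nonneg (mul_nonneg hM hs)]
    · rintro ⟨u', hu⟩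
      exact hC.not_isPosSol_of_forall_mul_le hT.le hLin.continuous
        (fun s hs => by simp [hLin, hs, hM, mul_nonneg])
        (fun s => mul_le_mul_of_nonneg_left (le_max_left s 0) hM) hu
  obtain ⟨z, hz, hJz⟩ := exists_critical_point_of_barrier (B.isCompactOperator_embedding T)
    (continuous_potential hT.le ha H) (continuous_potentialForm hT.le ha h) hC₁ htaylor
    (continuous_potentialForm hT.le ha hLin)
    (fun s u hs => potentialForm_smul hT.le ha hs (fun r => by
      simp [hLin, mul_left_comm s, mul_max_of_nonneg _ _ hs]) u)
    (norm_potentialForm_sub_le hT.le ha hhM) hker hr hbarrier hJ₀ hr₀ hJ₁ hr₁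
  refine ⟨_, (eq_zero_or_exists_isPosSol hT ha (K := K) hh₀ (fun s hs => ?_) hz).resolve_left ?_⟩
  · have hs_lip := hh.norm_sub_le s 0
    rwa [hh₀ (mem_Iic.2 le_rfl), Pi.zero_apply, sub_zero, sub_zero, Real.norm_eq_abs,
      Real.norm_eq_abs, abs_of_nonneg hs] at hs_lip
  · rintro rfl
    exact hJz.not_gt hJ₀

end BoundaryCondition

end VariationalProblem

section Primitive

variable {h : C(ℝ, ℝ)} {s : ℝ}

/-- The primitive of `h` that vanishes at the origin. -/
noncomputable def primitive (h : C(ℝ, ℝ)) : C(ℝ, ℝ) :=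
  ⟨fun s => ∫ t in (0 : ℝ)..s, h t, intervalIntegral.continuous_primitive
    (fun _ _ => h.continuous.intervalIntegrable _ _) 0⟩

lemma hasDerivAt_primitive (h : C(ℝ, ℝ)) (s : ℝ) : HasDerivAt (primitive h) (h s) s :=
  (h.continuous.integral_hasStrictDerivAt 0 s).hasDerivAt

lemma monotone_primitive (hh : ∀ s, 0 ≤ h s) : Monotone (primitive h) :=
  monotone_of_hasDerivAt_nonneg (hasDerivAt_primitive h) hh

lemma primitive_of_nonpos (hh₀ : EqOn h 0 (Iic 0)) (hs : s ≤ 0) : primitive h s = 0 :=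
  (intervalIntegral.integral_congr fun _ ht => hh₀ (uIcc_of_ge hs ▸ ht).2).trans
    intervalIntegral.integral_zero

lemma primitive_nonneg (hh : ∀ s, 0 ≤ h s) (hh₀ : EqOn h 0 (Iic 0)) (s : ℝ) :
    0 ≤ primitive h s :=
  (primitive_of_nonpos hh₀ (min_le_right s 0)).ge.trans (monotone_primitive hh (min_le_left s 0))

lemma primitive_pos (hh_pos : ∀ s, 0 < s → 0 < h s) (hs : 0 < s) : 0 < primitive h s :=
  intervalIntegral.intervalIntegral_pos_of_pos_on (h.continuous.intervalIntegrable 0 s)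
    (fun t ht => hh_pos t ht.1) hs

lemma sub_le_primitive {M C : ℝ} (hh : ∀ s, |h s - M * max s 0| ≤ C) (hs : 0 ≤ s) :
    M * s ^ 2 / 2 - C * s ≤ primitive h s := by
  have hlin : ∫ t in (0 : ℝ)..s, (M * t - C) = M * s ^ 2 / 2 - C * s := by
    rw [intervalIntegral.integral_sub (Continuous.intervalIntegrable (by fun_prop) 0 s)
      intervalIntegrable_const, intervalIntegral.integral_const_mul, integral_id]
    simp only [intervalIntegral.integral_const, smul_eq_mul]
    ring
  rw [← hlin]
  refine intervalIntegral.integral_mono_on hs (Continuous.intervalIntegrable (by fun_prop) 0 s)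
    (h.continuous.intervalIntegrable 0 s) fun t ht => ?_
  have := (abs_le.1 (hh t)).1
  rw [max_eq_left ht.1] at this
  linarith

end Primitive

section MountainPassGeometry

open scoped NNReal

variable {T : ℝ} {a : ℝ → ℝ}

lemma sq_le_mul_of_hasDerivAt_of_nonneg {h H : ℝ → ℝ} {K : ℝ≥0} (hK : 0 < K) {ρ : ℝ}
    (hh : LipschitzOnWith K h (Iic ρ)) (hH : ∀ s ≤ ρ, HasDerivAt H (h s) s)
    (hh_nonneg : ∀ s, 0 ≤ h s) (hH_nonneg : ∀ s, 0 ≤ H s) {s : ℝ} (hs : s ≤ ρ) :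
    h s ^ 2 ≤ 4 * K * H s := by
  have hK' : (0 : ℝ) < 4 * K := mul_pos four_pos hK
  have hd : 0 ≤ h s / (2 * K) := div_nonneg (hh_nonneg s) (by positivity)
  have htaylor := abs_taylor_sub_le_of_lipschitzOnWith (convex_Iic ρ) hh hH hs
    (mem_Iic.2 ((sub_le_self s hd).trans hs))
  have hle : 0 ≤ H s - h s ^ 2 / (4 * K) :=
    calc 0 ≤ H (s - h s / (2 * K)) := hH_nonneg _
      _ ≤ H s + h s * (s - h s / (2 * K) - s) + K * (s - h s / (2 * K) - s) ^ 2 := by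
        linarith [(abs_le.1 htaylor).2]
      _ = H s - h s ^ 2 / (4 * K) := by field_simp; ring
  have := (div_le_iff₀ hK').1 (sub_nonneg.1 hle)
  linarith

lemma mul_mul_le_of_sq_le_mul {A K N η ψ y : ℝ} (hA : 0 < A) (hK : 0 < K) (hη : η ^ 2 ≤ 4 * K * ψ) :
    N * (η * y) ≤ A / 2 * ψ + 2 * N ^ 2 / A * K * y ^ 2 :=
  calc N * (η * y)
      = A / (8 * K) * η ^ 2 + 2 * N ^ 2 / A * K * y ^ 2
        - A / (8 * K) * (η - 4 * K * N * y / A) ^ 2 := by field_simp; ring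
    _ ≤ A / (8 * K) * (4 * K * ψ) + 2 * N ^ 2 / A * K * y ^ 2 := by
      refine (sub_le_self _ (by positivity)).trans ?_
      gcongr
    _ = A / 2 * ψ + 2 * N ^ 2 / A * K * y ^ 2 := by field_simp; ring

lemma integral_mul_comp_le_of_abs_sub_le (hT : 0 ≤ T) (ha : IntervalIntegrable a volume 0 T)
    {h H : ℝ → ℝ} {D : Set ℝ} (hD : Convex ℝ D) {K : ℝ≥0} (hh : LipschitzOnWith K h D)
    (hH : ∀ s ∈ D, HasDerivAt H (h s) s) {u : ℝ → ℝ} (hu : ContinuousOn u (Icc 0 T)) {c y : ℝ}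
    (hc : c ∈ D) (huD : MapsTo u (Icc 0 T) D) (huc : ∀ x ∈ Icc 0 T, |u x - c| ≤ y) :
    ∫ x in (0 : ℝ)..T, a x * H (u x) ≤
      (∫ x in (0 : ℝ)..T, a x) * H c + (∫ x in (0 : ℝ)..T, |a x|) * (|h c| * y + K * y ^ 2) := by
  have hHu : ContinuousOn (fun x => H (u x)) (Icc 0 T) := fun x hx =>
    (hH _ (huD hx)).continuousAt.comp_continuousWithinAt (hu x hx)
  rw [← intervalIntegral.integral_mul_const, ← intervalIntegral.integral_mul_const,
    ← intervalIntegral.integral_add (ha.mul_const _) (ha.abs.mul_const _)]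
  refine intervalIntegral.integral_mono_on hT (intervalIntegrable_mul_of_continuousOn_Icc hT ha hHu)
    ((ha.mul_const _).add (ha.abs.mul_const _)) fun x hx => ?_
  have hosc : |H (u x) - H c| ≤ |h c| * y + K * y ^ 2 :=
    calc |H (u x) - H c| = |h c * (u x - c) + (H (u x) - H c - h c * (u x - c))| := by ring_nf
      _ ≤ |h c| * |u x - c| + K * (u x - c) ^ 2 := by
        rw [← abs_mul]
        exact (abs_add_le _ _).trans
          (by gcongr; exact abs_taylor_sub_le_of_lipschitzOnWith hD hh hH hc (huD hx))
      _ ≤ |h c| * y + K * y ^ 2 := by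
        rw [← sq_abs (u x - c)]
        gcongr <;> exact huc x hx
  calc a x * H (u x) = a x * H c + a x * (H (u x) - H c) := by ring
    _ ≤ a x * H c + |a x| * (|h c| * y + K * y ^ 2) := by
      refine add_le_add le_rfl ((le_abs_self _).trans ?_)
      rw [abs_mul]
      gcongr

namespace BoundaryCondition

variable {B : BoundaryCondition}

lemma energy_eq (hT : 0 ≤ T) (ha : IntervalIntegrable a volume 0 T) (H : C(ℝ, ℝ)) (z : B.space T) :
    B.energy hT ha H z = ‖(z : H1 T).snd‖ ^ 2 / 2
      - (∫ x in (0 : ℝ)..T, a x * H (IccExtend hT (B.embedding T z) x))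
      + ∫ x in (0 : ℝ)..T, max (-IccExtend hT (B.embedding T z) x) 0 ^ 2 / 2 := by
  have hneg : weightedIntegral hT (intervalIntegrable_const (c := 1))
      (negPartPrimitive.comp (B.embedding T z)) =
        -∫ x in (0 : ℝ)..T, max (-IccExtend hT (B.embedding T z) x) 0 ^ 2 / 2 := by
    rw [weightedIntegral_apply, ← intervalIntegral.integral_neg]
    exact intervalIntegral.integral_congr fun x _ => one_mul _
  rw [energy, potential, hneg, embedding_apply_zero hT, Submodule.coe_norm, H1.norm_sq_eq,
    weightedIntegral_apply]
  have : ∫ x in (0 : ℝ)..T, a x * IccExtend hT (H.comp (B.embedding T z)) x =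
    ∫ x in (0 : ℝ)..T, a x * H (IccExtend hT (B.embedding T z) x) := rfl
  linarith

lemma abs_embedding_sub_fst_le (hT : 0 ≤ T) (z : B.space T) {x : ℝ} :
    |IccExtend hT (B.embedding T z) x - (z : H1 T).fst| ≤ √T * ‖(z : H1 T).snd‖ :=
  H1.abs_toContinuousMap_sub_fst_le (z : H1 T) _

lemma le_energy_of_supBound_le (hT : 0 < T) (ha : IntervalIntegrable a volume 0 T)
    {A : ℝ} (hA : A = -∫ x in (0 : ℝ)..T, a x) (hA_pos : 0 < A) {h H : C(ℝ, ℝ)} {K : ℝ≥0}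
    (hK : 0 < K)
    (hKa : (2 * (∫ x in (0 : ℝ)..T, |a x|) ^ 2 / A + ∫ x in (0 : ℝ)..T, |a x|) * T * K ≤ 1 / 4)
    {ρ : ℝ} (hh : LipschitzOnWith K h (Iic ρ)) (hH : ∀ s, HasDerivAt H (h s) s)
    (hh_nonneg : ∀ s, 0 ≤ h s) (hH_nonneg : ∀ s, 0 ≤ H s) {z : B.space T}
    (hz : H1.supBound (z : H1 T) ≤ ρ) :
    ‖(z : H1 T).snd‖ ^ 2 / 4 + A / 2 * H (z : H1 T).fst
        + ∫ x in (0 : ℝ)..T, max (-IccExtend hT.le (B.embedding T z) x) 0 ^ 2 / 2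
      ≤ B.energy hT.le ha H z := by
  set c := (z : H1 T).fst
  set p := ‖(z : H1 T).snd‖
  set N := ∫ x in (0 : ℝ)..T, |a x|
  set u := IccExtend hT.le (B.embedding T z)
  have hosc (x : ℝ) : |u x - c| ≤ √T * p := abs_embedding_sub_fst_le hT.le z
  have hy_sq : (√T * p) ^ 2 = T * p ^ 2 := by rw [mul_pow, Real.sq_sqrt hT.le]
  have hbound : |c| + √T * p ≤ ρ := hz
  have huρ (x : ℝ) : u x ≤ ρ := by linarith [(abs_le.1 (hosc x)).2, le_abs_self c]
  have hcρ : c ≤ ρ := by linarith [(abs_nonneg _).trans (hosc 0), le_abs_self c]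
  have hpot : ∫ x in (0 : ℝ)..T, a x * H (u x) ≤
      (∫ x in (0 : ℝ)..T, a x) * H c + N * (|h c| * (√T * p) + K * (√T * p) ^ 2) :=
    integral_mul_comp_le_of_abs_sub_le hT.le ha (convex_Iic ρ) hh (fun s _ => hH s)
      ((B.embedding T z).IccExtend hT.le).continuous.continuousOn hcρ (fun x _ => huρ x)
      (fun x _ => hosc x)
  have hyoung : N * (h c * (√T * p)) ≤ A / 2 * H c + 2 * N ^ 2 / A * K * (√T * p) ^ 2 :=
    mul_mul_le_of_sq_le_mul hA_pos hK
      (sq_le_mul_of_hasDerivAt_of_nonneg hK hh (fun s _ => hH s) hh_nonneg hH_nonneg hcρ)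
  have hsmall := mul_le_mul_of_nonneg_right hKa (sq_nonneg p)
  rw [abs_of_nonneg (hh_nonneg c), hy_sq, neg_eq_iff_eq_neg.1 hA.symm] at hpot
  rw [hy_sq] at hyoung
  rw [energy_eq]
  linarith

lemma min_le_of_supBound_eq (hT : 0 < T) {A ρ : ℝ} (hA : 0 ≤ A) (hρ : 0 ≤ ρ) {H : ℝ → ℝ}
    (hH : Monotone H) (hH_nonneg : ∀ s, 0 ≤ H s) {z : B.space T}
    (hz : H1.supBound (z : H1 T) = ρ) :
    min (ρ ^ 2 / (64 * T)) (min (A * H (3 * ρ / 4)) (T * ρ ^ 2 / 8)) ≤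
      ‖(z : H1 T).snd‖ ^ 2 / 4 + A * H (z : H1 T).fst
        + ∫ x in (0 : ℝ)..T, max (-IccExtend hT.le (B.embedding T z) x) 0 ^ 2 / 2 := by
  set c := (z : H1 T).fst
  set p := ‖(z : H1 T).snd‖
  set u := IccExtend hT.le (B.embedding T z)
  have hu : Continuous u := ((B.embedding T z).IccExtend hT.le).continuous
  have hbound : |c| + √T * p = ρ := hz
  have hneg : 0 ≤ ∫ x in (0 : ℝ)..T, max (-u x) 0 ^ 2 / 2 :=
    intervalIntegral.integral_nonneg hT.le fun _ _ => by positivity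
  have hAH : 0 ≤ A * H c := mul_nonneg hA (hH_nonneg c)
  rcases le_or_gt (ρ / 4) (√T * p) with hp | hp
  · have hp_sq : ρ ^ 2 / (64 * T) ≤ p ^ 2 / 4 :=
      calc ρ ^ 2 / (64 * T) = (ρ / 4) ^ 2 / (4 * T) := by ring
        _ ≤ (√T * p) ^ 2 / (4 * T) := by gcongr
        _ = p ^ 2 / 4 := by rw [mul_pow, Real.sq_sqrt hT.le]; field_simp
    exact (min_le_left _ _).trans (by linarith)
  rcases le_total 0 c with hc | hc
  · rw [abs_of_nonneg hc] at hbound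
    have hHc : A * H (3 * ρ / 4) ≤ A * H c := by gcongr; exact hH (by linarith)
    exact (min_le_right _ _).trans ((min_le_left _ _).trans (by linarith [sq_nonneg p]))
  · rw [abs_of_nonpos hc] at hbound
    have hint : T * ρ ^ 2 / 8 ≤ ∫ x in (0 : ℝ)..T, max (-u x) 0 ^ 2 / 2 :=
      calc T * ρ ^ 2 / 8 = ∫ _ in (0 : ℝ)..T, (ρ / 2) ^ 2 / 2 := by
            simp only [intervalIntegral.integral_const, smul_eq_mul]; ring
        _ ≤ ∫ x in (0 : ℝ)..T, max (-u x) 0 ^ 2 / 2 := by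
          refine intervalIntegral.integral_mono_on hT.le intervalIntegrable_const
            (Continuous.intervalIntegrable (by fun_prop) 0 T) fun x _ => ?_
          have hux : u x ≤ c + √T * p := by
            linarith [(abs_le.1 (abs_embedding_sub_fst_le hT.le z (x := x))).2]
          gcongr
          exact (by linarith : ρ / 2 ≤ -u x).trans (le_max_left _ _)
    exact (min_le_right _ _).trans ((min_le_right _ _).trans (by linarith [sq_nonneg p]))

lemma exists_le_energy_primitive (hT : 0 < T) (ha : IntervalIntegrable a volume 0 T)
    (ha_neg : ∫ x in (0 : ℝ)..T, a x < 0) {h : C(ℝ, ℝ)} (hh₀ : EqOn h 0 (Iic 0))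
    (hh_pos : ∀ s, 0 < s → 0 < h s)
    (hh_small : ∀ ε : ℝ≥0, 0 < ε → ∃ ρ > 0, LipschitzOnWith ε h (Iic ρ)) :
    ∃ ρ > 0, ∃ α > 0, ∀ (B : BoundaryCondition) (z : B.space T),
      (H1.supBound (z : H1 T) ≤ ρ → 0 ≤ B.energy hT.le ha (primitive h) z) ∧
      (H1.supBound (z : H1 T) = ρ → α ≤ B.energy hT.le ha (primitive h) z) := by
  set A := -∫ x in (0 : ℝ)..T, a x with hA
  have hA_pos : 0 < A := neg_pos.2 ha_neg
  have hh_nonneg (s : ℝ) : 0 ≤ h s :=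
    (le_or_gt s 0).elim (fun hs => (hh₀ hs).ge) fun hs => (hh_pos s hs).le
  have hH_nonneg := primitive_nonneg hh_nonneg hh₀
  obtain ⟨K, hK, hKa⟩ := exists_pos_mul_lt (show (0 : ℝ) < 1 / 4 by norm_num)
    ((2 * (∫ x in (0 : ℝ)..T, |a x|) ^ 2 / A + ∫ x in (0 : ℝ)..T, |a x|) * T)
  lift K to ℝ≥0 using hK.le
  obtain ⟨ρ, hρ, hlip⟩ := hh_small K (by exact_mod_cast hK)
  have hlow {B : BoundaryCondition} {z : B.space T} (hz : H1.supBound (z : H1 T) ≤ ρ) :=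
    le_energy_of_supBound_le hT ha hA hA_pos (by exact_mod_cast hK) hKa.le hlip
      (hasDerivAt_primitive h) hh_nonneg hH_nonneg hz
  have hHρ : 0 < primitive h (3 * ρ / 4) := primitive_pos hh_pos (by positivity)
  refine ⟨ρ, hρ, min (ρ ^ 2 / (64 * T)) (min (A / 2 * primitive h (3 * ρ / 4)) (T * ρ ^ 2 / 8)),
    by positivity, fun B z => ⟨fun hz => ?_, fun hz => (min_le_of_supBound_eq hT
      (by positivity) hρ.le (monotone_primitive hh_nonneg) hH_nonneg hz).trans (hlow hz.le)⟩⟩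
  · have hneg : 0 ≤ ∫ x in (0 : ℝ)..T, max (-IccExtend hT.le (B.embedding T z) x) 0 ^ 2 / 2 :=
      intervalIntegral.integral_nonneg hT.le fun _ _ => by positivity
    have hH_fst := mul_nonneg hA_pos.le (hH_nonneg (z : H1 T).fst)
    linarith [hlow hz, sq_nonneg ‖(z : H1 T).snd‖]

end BoundaryCondition

end MountainPassGeometry

section BumpEnergy

open scoped RealInnerProductSpace

variable {T σ τ : ℝ} {a : ℝ → ℝ}

/-- The element of `H¹(0,T)` encoding `bump σ τ`, for `[σ, τ] ⊆ [0, T]`. -/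
noncomputable def bumpVector (T σ τ : ℝ) : H1 T :=
  WithLp.toLp 2 (0, (memLp_two_of_continuousOn (continuous_bumpDeriv σ τ).continuousOn).toLp)

lemma snd_bumpVector_ae_eq (T σ τ : ℝ) :
    (bumpVector T σ τ).snd =ᵐ[volume.restrict (Ioc 0 T)] bumpDeriv σ τ :=
  MemLp.coeFn_toLp (memLp_two_of_continuousOn (continuous_bumpDeriv σ τ).continuousOn)

lemma norm_snd_bumpVector_sq (hT : 0 ≤ T) (σ τ : ℝ) :
    ‖(bumpVector T σ τ).snd‖ ^ 2 = ∫ x in (0 : ℝ)..T, bumpDeriv σ τ x ^ 2 := by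
  rw [← real_inner_self_eq_norm_sq, L2.inner_def, intervalIntegral.integral_of_le hT]
  refine integral_congr_ae ((snd_bumpVector_ae_eq T σ τ).mono fun x hx => ?_)
  simp only [hx, real_inner_self_eq_norm_sq, Real.norm_eq_abs, sq_abs]

namespace IsPositivityInterval

variable (hI : IsPositivityInterval T a σ τ)

include hI

lemma inner_evalVector_bumpVector {x : ℝ} (hx : x ∈ Icc 0 T) :
    ⟪H1.evalVector T x, bumpVector T σ τ⟫ = bump σ τ x := by
  have hint : ∫ t in (0 : ℝ)..x, (bumpVector T σ τ).snd t = bump σ τ x - bump σ τ 0 := by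
    rw [← intervalIntegral.integral_eq_sub_of_hasDerivAt (fun t _ => hasDerivAt_bump σ τ t)
      ((continuous_bumpDeriv σ τ).intervalIntegrable 0 x), intervalIntegral.integral_of_le hx.1,
      intervalIntegral.integral_of_le hx.1]
    exact integral_congr_ae (ae_restrict_of_ae_restrict_of_subset
      (Ioc_subset_Ioc_right hx.2) (snd_bumpVector_ae_eq T σ τ))
  rw [H1.inner_evalVector hx, hint, hI.bump_zero, sub_zero]
  exact zero_add _

lemma bumpVector_mem_space (B : BoundaryCondition) : bumpVector T σ τ ∈ B.space T := by
  have hT : 0 ≤ T := nonempty_Icc.1 ((nonempty_Icc.2 hI.le).mono hI.subset)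
  cases B with
  | neumann => exact Submodule.mem_top
  | periodic =>
    refine Submodule.mem_orthogonal_singleton_iff_inner_right.2 ?_
    rw [inner_sub_left, hI.inner_evalVector_bumpVector (right_mem_Icc.2 hT),
      hI.inner_evalVector_bumpVector (left_mem_Icc.2 hT), hI.bump_right, hI.bump_zero, sub_zero]

lemma integral_mul_primitive_bump_ge (ha : IntervalIntegrable a volume 0 T) {h : C(ℝ, ℝ)}
    {M C : ℝ} (hhM : ∀ s, |h s - M * max s 0| ≤ C) {R : ℝ} (hR : 0 ≤ R) :
    M * R ^ 2 / 2 * (∫ x in (0 : ℝ)..T, a x * bump σ τ x ^ 2)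
        - C * R * (∫ x in (0 : ℝ)..T, a x * bump σ τ x) ≤
      ∫ x in (0 : ℝ)..T, a x * primitive h (R * bump σ τ x) := by
  have hT : 0 ≤ T := nonempty_Icc.1 ((nonempty_Icc.2 hI.le).mono hI.subset)
  have hint {φ : ℝ → ℝ} (hφ : Continuous φ) :
      IntervalIntegrable (fun x => a x * φ x) volume 0 T := ha.mul_continuousOn hφ.continuousOn
  have hbump := continuous_bump σ τ
  rw [← intervalIntegral.integral_const_mul, ← intervalIntegral.integral_const_mul,
    ← intervalIntegral.integral_sub ((hint (by fun_prop)).const_mul _)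
      ((hint (by fun_prop)).const_mul _)]
  refine intervalIntegral.integral_mono_ae hT (((hint (by fun_prop)).const_mul _).sub
    ((hint (by fun_prop)).const_mul _)) (hint (by fun_prop)) ?_
  filter_upwards [(ae_restrict_iff' measurableSet_Icc).1 hI.ae_nonneg] with x hx
  by_cases hxI : x ∈ Icc σ τ
  · calc M * R ^ 2 / 2 * (a x * bump σ τ x ^ 2) - C * R * (a x * bump σ τ x)
        = a x * (M * (R * bump σ τ x) ^ 2 / 2 - C * (R * bump σ τ x)) := by ring
      _ ≤ a x * primitive h (R * bump σ τ x) :=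
        mul_le_mul_of_nonneg_left (sub_le_primitive hhM (mul_nonneg hR (bump_nonneg σ τ x)))
          (hx hxI)
  · have hzero := bump_eq_zero hI.le (notMem_subset Ioo_subset_Icc_self hxI)
    simp [hzero, primitive]

lemma energy_smul_bumpVector (hT : 0 ≤ T) (ha : IntervalIntegrable a volume 0 T) (H : C(ℝ, ℝ))
    {B : BoundaryCondition} {R : ℝ} (hR : 0 ≤ R) :
    B.energy hT ha H (R • ⟨bumpVector T σ τ, hI.bumpVector_mem_space B⟩) =
      R ^ 2 * (∫ x in (0 : ℝ)..T, bumpDeriv σ τ x ^ 2) / 2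
        - ∫ x in (0 : ℝ)..T, a x * H (R * bump σ τ x) := by
  set z : B.space T := R • ⟨bumpVector T σ τ, hI.bumpVector_mem_space B⟩ with hz
  have hzx {x : ℝ} (hx : x ∈ uIcc 0 T) : IccExtend hT (B.embedding T z) x = R * bump σ τ x := by
    rw [uIcc_of_le hT] at hx
    rw [IccExtend_of_mem _ _ hx, hz, map_smul, ContinuousMap.smul_apply, smul_eq_mul,
      ← hI.inner_evalVector_bumpVector hx]
    rfl
  have hneg : ∫ x in (0 : ℝ)..T, max (-IccExtend hT (B.embedding T z) x) 0 ^ 2 / 2 = 0 := by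
    refine (intervalIntegral.integral_congr fun x hx => ?_).trans intervalIntegral.integral_zero
    simp only [hzx hx]
    rw [max_eq_right (neg_nonpos.2 (mul_nonneg hR (bump_nonneg σ τ x)))]
    norm_num
  have hpot : ∫ x in (0 : ℝ)..T, a x * H (IccExtend hT (B.embedding T z) x) =
      ∫ x in (0 : ℝ)..T, a x * H (R * bump σ τ x) :=
    intervalIntegral.integral_congr fun x hx => by simp only [hzx hx]
  rw [BoundaryCondition.energy_eq, hneg, hpot, add_zero, hz, Submodule.coe_smul, WithLp.smul_snd,
    norm_smul, mul_pow, Real.norm_eq_abs, sq_abs, norm_snd_bumpVector_sq hT]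

lemma exists_energy_primitive_neg (hT : 0 ≤ T) (ha : IntervalIntegrable a volume 0 T)
    {h : C(ℝ, ℝ)} {M C : ℝ} (hhM : ∀ s, |h s - M * max s 0| ≤ C)
    (hM : ∫ x in (0 : ℝ)..T, bumpDeriv σ τ x ^ 2 < M * ∫ x in (0 : ℝ)..T, a x * bump σ τ x ^ 2)
    (B : BoundaryCondition) : ∃ z : B.space T, B.energy hT ha (primitive h) z < 0 := by
  set D := ∫ x in (0 : ℝ)..T, bumpDeriv σ τ x ^ 2
  set P := ∫ x in (0 : ℝ)..T, a x * bump σ τ x ^ 2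
  set Q := ∫ x in (0 : ℝ)..T, a x * bump σ τ x
  obtain ⟨R, hR, hRlt⟩ : ∃ R, 0 < R ∧ C * Q < R * ((M * P - D) / 2) :=
    ((eventually_gt_atTop 0).and ((tendsto_id.atTop_mul_const
      (half_pos (sub_pos.2 hM))).eventually_gt_atTop (C * Q))).exists
  refine ⟨R • ⟨bumpVector T σ τ, hI.bumpVector_mem_space B⟩, ?_⟩
  rw [hI.energy_smul_bumpVector hT ha _ hR.le]
  calc R ^ 2 * D / 2 - ∫ x in (0 : ℝ)..T, a x * primitive h (R * bump σ τ x)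
      ≤ R * (C * Q - R * ((M * P - D) / 2)) := by
        linarith [hI.integral_mul_primitive_bump_ge ha hhM hR.le]
    _ < 0 := mul_neg_of_pos_of_neg hR (sub_neg.2 hRlt)

end IsPositivityInterval

end BumpEnergy

section LinearExtension

open scoped NNReal

variable {g g' : ℝ → ℝ} {M R : ℝ} {hR : 0 ≤ R} {s : ℝ}

/-- The extension to `ℝ` of the restriction of `g` to `[0, R]` that is constant on `(-∞, 0]` and
affine with slope `M` on `[R, ∞)`. -/
noncomputable def linearExtension (g : ℝ → ℝ) (M : ℝ) (hR : 0 ≤ R) (s : ℝ) : ℝ :=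
  g (projIcc 0 R hR s) + M * max (s - R) 0

lemma linearExtension_of_le (hs : s ≤ R) : linearExtension g M hR s = g (projIcc 0 R hR s) := by
  rw [linearExtension, max_eq_right (sub_nonpos.2 hs), mul_zero, add_zero]

lemma linearExtension_of_mem (hs : s ∈ Icc 0 R) : linearExtension g M hR s = g s := by
  rw [linearExtension_of_le hs.2, projIcc_of_mem hR hs]

lemma linearExtension_of_nonpos (hs : s ≤ 0) : linearExtension g M hR s = g 0 := by
  rw [linearExtension_of_le (hs.trans hR), projIcc_of_le_left hR hs]

lemma linearExtension_of_ge (hs : R ≤ s) : linearExtension g M hR s = g R + M * (s - R) := by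
  rw [linearExtension, projIcc_of_right_le hR hs, max_eq_left (sub_nonneg.2 hs)]

lemma linearExtension_pos (hg : ∀ s, 0 < s → 0 < g s) (hM : 0 ≤ M) (hR : 0 < R) (hs : 0 < s) :
    0 < linearExtension g M hR.le s := by
  refine add_pos_of_pos_of_nonneg (hg _ ?_) (by positivity)
  rw [coe_projIcc]
  positivity

lemma mul_le_linearExtension {R₀ : ℝ} (hg : ∀ s, R₀ ≤ s → M * s ≤ g s) (hR₀ : 0 ≤ R₀)
    (hR₀R : R₀ ≤ R) (hs : R₀ ≤ s) : M * s ≤ linearExtension g M hR s := by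
  rcases le_total s R with hsR | hsR
  · rw [linearExtension_of_mem ⟨hR₀.trans hs, hsR⟩]
    exact hg s hs
  · rw [linearExtension_of_ge hsR]
    linarith [hg R hR₀R]

lemma exists_abs_linearExtension_sub_le (hg : ContinuousOn g (Icc 0 R)) (M : ℝ) (hR : 0 ≤ R) :
    ∃ C, ∀ s, |linearExtension g M hR s - M * max s 0| ≤ C := by
  obtain ⟨C, hC⟩ := isCompact_Icc.exists_bound_of_continuousOn
    (hg.sub (by fun_prop : ContinuousOn (fun s => M * s) (Icc 0 R)))
  refine ⟨C, fun s => ?_⟩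
  have heq : linearExtension g M hR s - M * max s 0 =
      g (projIcc 0 R hR s) - M * (projIcc 0 R hR s : ℝ) := by
    rcases le_total s R with hs | hs
    · rw [linearExtension_of_le hs, coe_projIcc, min_eq_right hs, max_comm]
    · rw [linearExtension_of_ge hs, projIcc_of_right_le hR hs, max_eq_left (hR.trans hs)]
      ring
  rw [heq]
  exact hC _ (projIcc 0 R hR s).2

lemma lipschitzWith_comp_projIcc {K : ℝ≥0} {b c : ℝ} (hbc : b ≤ c)
    (hg : LipschitzOnWith K g (Icc b c)) : LipschitzWith K fun s => g (projIcc b c hbc s) := by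
  have := hg.to_restrict.comp (LipschitzWith.projIcc hbc)
  rwa [mul_one] at this

lemma lipschitzWith_linearExtension {K M : ℝ≥0} (hg : LipschitzOnWith K g (Icc 0 R)) :
    LipschitzWith (K + M) (linearExtension g M hR) := by
  have hslope : LipschitzWith M fun s : ℝ => (M : ℝ) * max (s - R) 0 := by
    refine LipschitzWith.of_dist_le_mul fun s t => ?_
    rw [Real.dist_eq, Real.dist_eq, ← mul_sub, abs_mul, abs_of_nonneg M.coe_nonneg]
    refine mul_le_mul_of_nonneg_left ?_ M.coe_nonneg
    exact (abs_max_sub_max_le_abs _ _ _).trans_eq (congrArg _ (sub_sub_sub_cancel_right s t R))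
  exact (lipschitzWith_comp_projIcc hR hg).add hslope

lemma lipschitzOnWith_linearExtension {ε : ℝ≥0} {ρ : ℝ} (hg : LipschitzOnWith ε g (Icc 0 ρ))
    (hρ : 0 ≤ ρ) (hρR : ρ ≤ R) : LipschitzOnWith ε (linearExtension g M hR) (Iic ρ) := by
  have heq {s : ℝ} (hs : s ≤ ρ) : linearExtension g M hR s = g (projIcc 0 ρ hρ s) := by
    rw [linearExtension_of_le (hs.trans hρR), coe_projIcc, coe_projIcc, min_eq_right hs,
      min_eq_right (hs.trans hρR)]
  intro s hs t ht
  rw [heq hs, heq ht]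
  exact lipschitzWith_comp_projIcc hρ hg s t

lemma exists_lipschitzOnWith_Icc_of_hasDerivWithinAt {b c : ℝ}
    (hg : ∀ s ∈ Icc b c, HasDerivWithinAt g (g' s) (Icc b c) s)
    (hg' : ContinuousOn g' (Icc b c)) : ∃ K, LipschitzOnWith K g (Icc b c) := by
  obtain ⟨K, hK⟩ := isCompact_Icc.exists_bound_of_continuousOn hg'
  exact ⟨K.toNNReal, (convex_Icc b c).lipschitzOnWith_of_nnnorm_hasDerivWithin_le hg fun s hs =>
    NNReal.le_toNNReal_of_coe_le (hK s hs)⟩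

lemma eventually_lipschitzOnWith_of_deriv_eq_zero
    (hg : ∀ s ∈ Ici (0 : ℝ), HasDerivWithinAt g (g' s) (Ici 0) s)
    (hg' : ContinuousWithinAt g' (Ici 0) 0) (hg'_zero : g' 0 = 0) {ε : ℝ≥0} (hε : 0 < ε) :
    ∀ᶠ ρ in nhdsWithin 0 (Ioi 0), LipschitzOnWith ε g (Icc 0 ρ) := by
  obtain ⟨δ, hδ, hδ'⟩ := Metric.continuousWithinAt_iff.1 hg' ε hε
  filter_upwards [Ioo_mem_nhdsGT hδ] with ρ hρ
  refine (convex_Icc 0 ρ).lipschitzOnWith_of_nnnorm_hasDerivWithin_le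
    (fun s hs => (hg s hs.1).mono Icc_subset_Ici_self) fun s hs => ?_
  have hdist := hδ' hs.1 (by rw [Real.dist_0_eq_abs, abs_of_nonneg hs.1]; exact hs.2.trans_lt hρ.2)
  rw [hg'_zero, dist_zero_right] at hdist
  exact hdist.le

lemma eq_zero_of_hasDerivWithinAt_of_tendsto_div {c : ℝ} (hg : HasDerivWithinAt g c (Ici 0) 0)
    (hg₀ : g 0 = 0) (hlim : Tendsto (fun s => g s / s) (nhdsWithin 0 (Ioi 0)) (nhds 0)) :
    c = 0 := by
  refine tendsto_nhds_unique
    ((hasDerivWithinAt_iff_tendsto_slope' self_notMem_Ioi).1 hg.Ioi_of_Ici) (hlim.congr fun s => ?_)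
  rw [slope_def_field, hg₀, sub_zero, sub_zero]

lemma exists_forall_mul_le_of_tendsto_div (hg : Tendsto (fun s => g s / s) atTop atTop) (M : ℝ) :
    ∃ R > 0, ∀ s, R ≤ s → M * s ≤ g s := by
  have hev : ∀ᶠ s in atTop, M * s ≤ g s := by
    filter_upwards [hg.eventually_ge_atTop M, eventually_gt_atTop 0] with s hs hs_pos
    exact (le_div_iff₀ hs_pos).1 hs
  obtain ⟨R, hR, hR_pos⟩ := ((eventually_forall_ge_atTop.2 hev).and (eventually_gt_atTop 0)).exists
  exact ⟨R, hR_pos, hR⟩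

/-- The nonlinearities to which the mountain pass argument applies: globally Lipschitz functions
vanishing on `(-∞, 0]`, positive and within bounded distance of `M * s` on `(0, ∞)`, whose Lipschitz
constant near `(-∞, 0]` is arbitrarily small. -/
structure IsAsymptoticallyLinear (h : ℝ → ℝ) (M : ℝ) : Prop where
  exists_lipschitzWith : ∃ K, LipschitzWith K h
  eqOn_zero : EqOn h 0 (Iic 0)
  pos : ∀ s, 0 < s → 0 < h s
  exists_lipschitzOnWith : ∀ ε : ℝ≥0, 0 < ε → ∃ ρ > 0, LipschitzOnWith ε h (Iic ρ)
  exists_abs_sub_le : ∃ C, ∀ s, |h s - M * max s 0| ≤ C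

lemma IsAsymptoticallyLinear.continuous {h : ℝ → ℝ} (hh : IsAsymptoticallyLinear h M) :
    Continuous h :=
  hh.exists_lipschitzWith.elim fun _ hK => hK.continuous

lemma IsAsymptoticallyLinear.nonneg {h : ℝ → ℝ} (hh : IsAsymptoticallyLinear h M) (s : ℝ) :
    0 ≤ h s :=
  (le_or_gt s 0).elim (fun hs => (hh.eqOn_zero hs).ge) fun hs => (hh.pos s hs).le

lemma isAsymptoticallyLinear_linearExtension (hg₀ : g 0 = 0) (hg_pos : ∀ s, 0 < s → 0 < g s)
    (hg : ∀ s ∈ Ici (0 : ℝ), HasDerivWithinAt g (g' s) (Ici 0) s) (hg' : ContinuousOn g' (Ici 0))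
    (hlim : Tendsto (fun s => g s / s) (nhdsWithin 0 (Ioi 0)) (nhds 0)) (M : ℝ≥0) (hR : 0 < R) :
    IsAsymptoticallyLinear (linearExtension g M hR.le) M := by
  obtain ⟨K, hK⟩ := exists_lipschitzOnWith_Icc_of_hasDerivWithinAt (b := 0) (c := R)
    (fun s hs => (hg s hs.1).mono Icc_subset_Ici_self) (hg'.mono Icc_subset_Ici_self)
  refine ⟨⟨K + M, lipschitzWith_linearExtension hK⟩,
    fun s hs => (linearExtension_of_nonpos hs).trans hg₀,
    fun s hs => linearExtension_pos hg_pos M.coe_nonneg hR hs, fun ε hε => ?_,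
    exists_abs_linearExtension_sub_le hK.continuousOn M hR.le⟩
  have hg'_zero := eq_zero_of_hasDerivWithinAt_of_tendsto_div (hg 0 self_mem_Ici) hg₀ hlim
  obtain ⟨ρ, hρ, hρ_pos, hρR⟩ := ((eventually_lipschitzOnWith_of_deriv_eq_zero hg
    (hg' 0 self_mem_Ici) hg'_zero hε).and (Ioo_mem_nhdsGT hR)).exists
  exact ⟨ρ, hρ_pos, lipschitzOnWith_linearExtension hρ hρ_pos.le hρR.le⟩

end LinearExtension

section Existence

open scoped NNReal

variable {B : BoundaryCondition} {T : ℝ} {a : ℝ → ℝ}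

lemma BoundaryCondition.energy_primitive_zero (hT : 0 ≤ T) (ha : IntervalIntegrable a volume 0 T)
    (h : C(ℝ, ℝ)) : B.energy hT ha (primitive h) 0 = 0 := by
  have hext (x : ℝ) : IccExtend hT (0 : Icc 0 T → ℝ) x = 0 := rfl
  simp [energy_eq, hext, primitive]

lemma IsAsymptoticallyLinear.exists_isPosSol {h : ℝ → ℝ} {M : ℝ}
    (hh : IsAsymptoticallyLinear h M) (hM : 0 ≤ M) (hT : 0 < T)
    (ha : IntervalIntegrable a volume 0 T) (ha_neg : ∫ x in (0 : ℝ)..T, a x < 0) {C : ℝ}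
    (hC : HasAprioriBound T a (Icc 0 T) C M) {σ τ : ℝ} (hI : IsPositivityInterval T a σ τ)
    (hMI : ∫ x in (0 : ℝ)..T, bumpDeriv σ τ x ^ 2 < M * ∫ x in (0 : ℝ)..T, a x * bump σ τ x ^ 2)
    (B : BoundaryCondition) : ∃ u u', B.IsPosSol T a h u u' := by
  obtain ⟨K, hK⟩ := hh.exists_lipschitzWith
  obtain ⟨C₀, hC₀⟩ := hh.exists_abs_sub_le
  lift h to C(ℝ, ℝ) using hh.continuous
  obtain ⟨ρ, hρ, α, hα, hgeom⟩ := BoundaryCondition.exists_le_energy_primitive hT ha ha_neg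
    hh.eqOn_zero hh.pos hh.exists_lipschitzOnWith
  obtain ⟨z₁, hz₁⟩ := hI.exists_energy_primitive_neg hT.le ha hC₀ hMI B
  exact B.exists_isPosSol_of_barrier hT ha hK (hasDerivAt_primitive h) hh.eqOn_zero hM hC₀ hC
    ((H1.continuous_supBound T).comp continuous_subtype_val) (fun z hz => (hgeom B z).2 hz)
    ((B.energy_primitive_zero hT.le ha h).trans_lt hα) (by simpa [H1.supBound] using hρ)
    (hz₁.trans hα) (lt_of_not_ge fun hz => ((hgeom B z₁).1 hz).not_gt hz₁)

lemma BoundaryCondition.IsPosSol.congr {g h u u' : ℝ → ℝ} (hu : B.IsPosSol T a h u u')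
    {R : ℝ} (huR : ∀ x ∈ Icc 0 T, u x ≤ R) (hgh : EqOn h g (Icc 0 R)) : B.IsPosSol T a g u u' where
  isSolOn := hu.isSolOn.congr_rhs fun x hx =>
    congrArg (a x * ·) (hgh ⟨(hu.pos x hx).le, huR x hx⟩)
  pos := hu.pos
  holds := hu.holds

variable {g g' : ℝ → ℝ}

lemma BoundaryCondition.exists_isPosSol (B : BoundaryCondition) (hT : 0 < T)
    (ha : IntervalIntegrable a volume 0 T) (ha1 : CondA1 T a)
    (ha_neg : ∫ x in (0 : ℝ)..T, a x < 0) (hg₀ : g 0 = 0) (hg_pos : ∀ s, 0 < s → 0 < g s)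
    (hg : ∀ s ∈ Ici (0 : ℝ), HasDerivWithinAt g (g' s) (Ici 0) s)
    (hg' : ContinuousOn g' (Ici 0))
    (hlim_zero : Tendsto (fun s => g s / s) (nhdsWithin 0 (Ioi 0)) (nhds 0))
    (hlim_top : Tendsto (fun s => g s / s) atTop atTop) : ∃ u u', B.IsPosSol T a g u u' := by
  obtain ⟨m, σ, τ, hm, hI, -⟩ := ha1.exists_isPositivityInterval
  obtain ⟨C, hC⟩ := ha1.exists_eventually_hasAprioriBound hT ha
  obtain ⟨M, ⟨hMC, hMI⟩, hM⟩ := ((hC.and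
    ((hI ⟨0, hm⟩).eventually_integral_bumpDeriv_sq_lt ha)).and (eventually_ge_atTop 0)).exists
  lift M to ℝ≥0 using hM
  obtain ⟨R₀, hR₀, hgR₀⟩ := exists_forall_mul_le_of_tendsto_div hlim_top M
  obtain ⟨R, hR₀R, hCR⟩ : ∃ R, R₀ ≤ R ∧ C * R₀ ≤ R := ⟨_, le_max_left _ _, le_max_right _ _⟩
  have hR : 0 < R := hR₀.trans_le hR₀R
  have hh := isAsymptoticallyLinear_linearExtension hg₀ hg_pos hg hg' hlim_zero M hR
  obtain ⟨u, u', hu⟩ := hh.exists_isPosSol M.coe_nonneg hT ha ha_neg hMC (hI ⟨0, hm⟩) hMI B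
  have huR : ∀ x ∈ Icc 0 T, u x ≤ C * R₀ :=
    hMC hh.continuous (fun s _ => hh.nonneg s) hR₀
      (fun s hs => mul_le_linearExtension hgR₀ hR₀.le hR₀R hs) hu
  exact ⟨u, u', hu.congr (fun x hx => (huR x hx).trans hCR) fun s hs => linearExtension_of_mem hs⟩

lemma BoundaryCondition.exists_isPosSol_iff (B : BoundaryCondition) (hT : 0 < T)
    (ha : IntervalIntegrable a volume 0 T) (ha1 : CondA1 T a) (hg₀ : g 0 = 0)
    (hg_pos : ∀ s, 0 < s → 0 < g s)
    (hg : ∀ s ∈ Ici (0 : ℝ), HasDerivWithinAt g (g' s) (Ici 0) s)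
    (hg' : ContinuousOn g' (Ici 0)) (hg'_pos : ∀ s, 0 < s → 0 < g' s)
    (hlim_zero : Tendsto (fun s => g s / s) (nhdsWithin 0 (Ioi 0)) (nhds 0))
    (hlim_top : Tendsto (fun s => g s / s) atTop atTop) :
    (∃ u u', B.IsPosSol T a g u u') ↔ ∫ x in (0 : ℝ)..T, a x < 0 := by
  refine ⟨fun ⟨u, u', hu⟩ => ?_, fun ha_neg =>
    B.exists_isPosSol hT ha ha1 ha_neg hg₀ hg_pos hg hg' hlim_zero hlim_top⟩
  obtain ⟨m, σ, τ, hm, hI, -⟩ := ha1.exists_isPositivityInterval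
  exact hu.integral_weight_neg hT ha (hI ⟨0, hm⟩)
    (fun s hs => (hg s hs.le).hasDerivAt (Ici_mem_nhds hs)) (hg'.mono Ioi_subset_Ici_self)
    hg_pos hg'_pos

lemma posSolNeumann_iff {a g : ℝ → ℝ} :
    PosSolNeumann T a g ↔ ∃ u u', BoundaryCondition.neumann.IsPosSol T a g u u' :=
  exists₂_congr fun _ _ =>
    ⟨fun ⟨h, hpos, h₀⟩ => ⟨h, hpos, h₀⟩, fun h => ⟨h.isSolOn, h.pos, h.holds⟩⟩

lemma posSolPeriodic_iff {a g : ℝ → ℝ} :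
    PosSolPeriodic T a g ↔ ∃ u u', BoundaryCondition.periodic.IsPosSol T a g u u' :=
  exists₂_congr fun _ _ =>
    ⟨fun ⟨h, hpos, h₀⟩ => ⟨h, hpos, h₀⟩, fun h => ⟨h.isSolOn, h.pos, h.holds⟩⟩

end Existence

/-- Corollary: for `g` continuously differentiable on `[0,∞)` with `g(0) = 0`,
`g > 0` and `g' > 0` on `(0,∞)`, `g(s)/s → 0` as `s → 0⁺` and `g(s)/s → +∞` as
`s → +∞`, and a weight satisfying (a1), the problem `u'' + a(x) g(u) = 0` has a
positive Neumann (resp. periodic) solution if and only if `∫₀ᵀ a < 0`. -/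
theorem statement_8
    (T : ℝ) (hT : 0 < T)
    (g g' : ℝ → ℝ)
    (hg0 : g 0 = 0) (hgpos : ∀ s : ℝ, 0 < s → 0 < g s)
    (hgd : ∀ s ∈ Ici (0:ℝ), HasDerivWithinAt g (g' s) (Ici (0:ℝ)) s)
    (hgdc : ContinuousOn g' (Ici (0:ℝ)))
    (hgdpos : ∀ s : ℝ, 0 < s → 0 < g' s)
    (hlim0 : Tendsto (fun s => g s / s) (nhdsWithin 0 (Ioi 0)) (nhds 0))
    (hliminfty : Tendsto (fun s => g s / s) atTop atTop)
    (a : ℝ → ℝ) (ha : IntervalIntegrable a volume 0 T)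
    (ha1 : CondA1 T a) :
    (PosSolNeumann T a g ↔ (∫ x in (0:ℝ)..T, a x) < 0) ∧
    (PosSolPeriodic T a g ↔ (∫ x in (0:ℝ)..T, a x) < 0) := by
  rw [posSolNeumann_iff, posSolPeriodic_iff]
  exact ⟨BoundaryCondition.neumann.exists_isPosSol_iff hT ha ha1 hg0 hgpos hgd hgdc hgdpos hlim0
    hliminfty, BoundaryCondition.periodic.exists_isPosSol_iff hT ha ha1 hg0 hgpos hgd hgdc hgdpos
    hlim0 hliminfty⟩
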